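/- (Adequacy) Assume → = →β ∪ →R is locally confluent and preserves typing, and the typing map Θ is adequate. Then for every environment Γ, terms t, T and substitution σ, if Γ ⊢ t : T and σ ⊨ Γ, then tσ ∈ ⟦T⟧σ. In particular, taking σ the identity, every typable term is strongly normalizing. -/

import Mathlib

set_option maxHeartbeats 1000000

/-! # Terms of λΠ/R (de Bruijn representation) -/

inductive Trm (F : Type) : Type
  | type : Trm F
  | kind : Trm F
  | var : ℕ → Trm F
  | sym : F → Trm F
  | pi : Trm F → Trm F → Trm F
  | app : Trm F → Trm F → Trm F
  | lam : Trm F → Trm F → Trm F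

namespace Trm

variable {F : Type}

/-- Lifting of a renaming under a binder. -/
def upRen (ρ : ℕ → ℕ) : ℕ → ℕ
  | 0 => 0
  | n + 1 => ρ n + 1

/-- Renaming of (de Bruijn) variables. -/
def rename (ρ : ℕ → ℕ) : Trm F → Trm F
  | .type => .type
  | .kind => .kind
  | .var n => .var (ρ n)
  | .sym f => .sym f
  | .pi A B => .pi (rename ρ A) (rename (upRen ρ) B)
  | .app t u => .app (rename ρ t) (rename ρ u)
  | .lam A b => .lam (rename ρ A) (rename (upRen ρ) b)

/-- Lifting of a substitution under a binder. -/
def up (σ : ℕ → Trm F) : ℕ → Trm F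
  | 0 => .var 0
  | n + 1 => rename Nat.succ (σ n)

/-- Capture-avoiding (parallel) substitution. -/
def subst (σ : ℕ → Trm F) : Trm F → Trm F
  | .type => .type
  | .kind => .kind
  | .var n => σ n
  | .sym f => .sym f
  | .pi A B => .pi (subst σ A) (subst (up σ) B)
  | .app t u => .app (subst σ t) (subst σ u)
  | .lam A b => .lam (subst σ A) (subst (up σ) b)

/-- Cons of a term on a substitution: `scons a σ` maps `0` to `a` and `n+1` to `σ n`. -/
def scons (a : Trm F) (σ : ℕ → Trm F) : ℕ → Trm F
  | 0 => a
  | n + 1 => σ n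

/-- Substitution of the first free variable: `t[x ↦ a]`. -/
def subst1 (a t : Trm F) : Trm F := subst (scons a .var) t

/-- Shifting of all free variables. -/
def shift : Trm F → Trm F := rename Nat.succ

/-- Application of a head term to a list of arguments: `appList h [t1,…,tn] = h t1 … tn`. -/
def appList (h : Trm F) : List (Trm F) → Trm F
  | [] => h
  | a :: as => appList (.app h a) as

/-- Free (de Bruijn) variables of a term. -/
def FV : Trm F → Set ℕ
  | .type => ∅
  | .kind => ∅
  | .var n => {n}
  | .sym _ => ∅
  | .pi A B => FV A ∪ {n | n + 1 ∈ FV B}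
  | .app t u => FV t ∪ FV u
  | .lam A b => FV A ∪ {n | n + 1 ∈ FV b}

/-- The class 𝕂 of kinds: `K = TYPE | Πx:t.K`. -/
def IsKind : Trm F → Prop
  | .type => True
  | .pi _ B => IsKind B
  | _ => False

/-- Sorts: `TYPE` and `KIND`. -/
def IsSort (s : Trm F) : Prop := s = .type ∨ s = .kind

/-- The product arity of a term: the number of leading products. -/
def piArity : Trm F → ℕ
  | .pi _ B => piArity B + 1
  | _ => 0

/-- Strip `n` leading products. -/
def piCodN : ℕ → Trm F → Trm F
  | 0, T => T
  | n + 1, .pi _ B => piCodN n B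
  | _ + 1, T => T

/-- The first `n` domains of the leading products, as a de Bruijn context
(type of variable `0` first, i.e. innermost first). -/
def teleN : ℕ → Trm F → List (Trm F)
  | 0, _ => []
  | n + 1, .pi A B => teleN n B ++ [A]
  | _ + 1, _ => []

/-- The full telescope of leading products, as a de Bruijn context. -/
def telescope (T : Trm F) : List (Trm F) := teleN (piArity T) T

/-- The domains of the leading products, outermost first. -/
def piDoms : Trm F → List (Trm F)
  | .pi A B => A :: piDoms B
  | _ => []

end Trm

/-- The subterm relation (reflexive and transitive). -/
inductive Subterm {F : Type} : Trm F → Trm F → Prop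
  | refl (t : Trm F) : Subterm t t
  | piL {t A B} : Subterm t A → Subterm t (.pi A B)
  | piR {t A B} : Subterm t B → Subterm t (.pi A B)
  | appL {t u v} : Subterm t u → Subterm t (.app u v)
  | appR {t u v} : Subterm t v → Subterm t (.app u v)
  | lamL {t A b} : Subterm t A → Subterm t (.lam A b)
  | lamR {t A b} : Subterm t b → Subterm t (.lam A b)

/-! # Rewriting -/

/-- A set of rewriting rules `l → r`. -/
abbrev Rules (F : Type) := Set (Trm F × Trm F)

/-- `R` is a rewriting system: for every rule `l → r`, `FV(r) ⊆ FV(l)` and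
`l` is of the form `f l⃗`. -/
def IsRewriteSystem {F : Type} (R : Rules F) : Prop :=
  ∀ p ∈ R, Trm.FV p.2 ⊆ Trm.FV p.1 ∧ ∃ (f : F) (ls : List (Trm F)), p.1 = Trm.appList (.sym f) ls

/-- A symbol is defined if it heads the left-hand side of some rule. -/
def Defined {F : Type} (R : Rules F) (f : F) : Prop :=
  ∃ (ls : List (Trm F)) (r : Trm F), (Trm.appList (.sym f) ls, r) ∈ R

/-- One-step reduction `→ = →β ∪ →R`: β-reduction together with the closure of the
rules of `R` by substitution and context. -/
inductive Red {F : Type} (R : Rules F) : Trm F → Trm F → Prop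
  | beta (A b a : Trm F) : Red R (.app (.lam A b) a) (Trm.subst1 a b)
  | rule {l r : Trm F} (σ : ℕ → Trm F) : (l, r) ∈ R → Red R (Trm.subst σ l) (Trm.subst σ r)
  | appL {t t' u} : Red R t t' → Red R (.app t u) (.app t' u)
  | appR {t u u'} : Red R u u' → Red R (.app t u) (.app t u')
  | piL {A A' B} : Red R A A' → Red R (.pi A B) (.pi A' B)
  | piR {A B B'} : Red R B B' → Red R (.pi A B) (.pi A B')
  | lamL {A A' b} : Red R A A' → Red R (.lam A b) (.lam A' b)
  | lamR {A b b'} : Red R b b' → Red R (.lam A b) (.lam A b')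

/-- Multi-step reduction `→*`. -/
def RedStar {F : Type} (R : Rules F) : Trm F → Trm F → Prop := Relation.ReflTransGen (Red R)

/-- Joinability `↓`. -/
def Joinable {F : Type} (R : Rules F) (t u : Trm F) : Prop :=
  ∃ v, RedStar R t v ∧ RedStar R u v

/-- Local confluence: `← · → ⊆ →* · *←`. -/
def LocallyConfluent {F : Type} (R : Rules F) : Prop :=
  ∀ t u v, Red R t u → Red R t v → Joinable R u v

/-- `t` is strongly normalizing (terminating): no infinite reduction sequence from `t`. -/
def SN {F : Type} (R : Rules F) (t : Trm F) : Prop := Acc (fun a b => Red R b a) t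

/-- The set of strongly normalizing terms. -/
def SNset {F : Type} (R : Rules F) : Set (Trm F) := {t | SN R t}

/-- `t` is in normal form. -/
def NormalForm {F : Type} (R : Rules F) (t : Trm F) : Prop := ∀ u, ¬ Red R t u

/-- Neutral terms: `(λx:A.t)u v⃗`, `x v⃗`, or `f v⃗` where every rule `f l⃗ → r ∈ R`
satisfies `|l⃗| ≤ |v⃗|`. -/
def Neutral {F : Type} (R : Rules F) (t : Trm F) : Prop :=
  (∃ (A b a : Trm F) (vs : List (Trm F)), t = Trm.appList (.app (.lam A b) a) vs) ∨
  (∃ (x : ℕ) (vs : List (Trm F)), t = Trm.appList (.var x) vs) ∨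
  (∃ (f : F) (vs : List (Trm F)), t = Trm.appList (.sym f) vs ∧
    ∀ (ls : List (Trm F)) (r : Trm F), (Trm.appList (.sym f) ls, r) ∈ R → ls.length ≤ vs.length)

/-- Computability predicates: `S ⊆ SN`, `S` is closed under reduction, and `S` contains
every neutral term all of whose one-step reducts are in `S`. -/
def IsCompPred {F : Type} (R : Rules F) (S : Set (Trm F)) : Prop :=
  S ⊆ SNset R ∧ (∀ t ∈ S, ∀ u, Red R t u → u ∈ S) ∧
  (∀ t, Neutral R t → (∀ u, Red R t u → u ∈ S) → t ∈ S)

/-! # Typing: λP extended with function symbols and conversion modulo `→` -/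

/-- The typing rules of λΠ/R: the rules of λP (in de Bruijn presentation) with the extra
rule (fun) `⊢ f : Θ_f` and conversion up to joinability for `→`. -/
inductive Typing {F : Type} (R : Rules F) (Θ sΘ : F → Trm F) :
    List (Trm F) → Trm F → Trm F → Prop
  | ax : Typing R Θ sΘ [] .type .kind
  | var {Γ A s} : Trm.IsSort s → Typing R Θ sΘ Γ A s →
      Typing R Θ sΘ (A :: Γ) (.var 0) (Trm.shift A)
  | weak {Γ A s b B} : Trm.IsSort s → Typing R Θ sΘ Γ A s → Typing R Θ sΘ Γ b B →
      Typing R Θ sΘ (A :: Γ) (Trm.shift b) (Trm.shift B)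
  | prod {Γ A B s} : Trm.IsSort s → Typing R Θ sΘ Γ A .type → Typing R Θ sΘ (A :: Γ) B s →
      Typing R Θ sΘ Γ (.pi A B) s
  | abs {Γ A b B s} : Trm.IsSort s → Typing R Θ sΘ (A :: Γ) b B →
      Typing R Θ sΘ Γ (.pi A B) s → Typing R Θ sΘ Γ (.lam A b) (.pi A B)
  | app {Γ t a A B} : Typing R Θ sΘ Γ t (.pi A B) → Typing R Θ sΘ Γ a A →
      Typing R Θ sΘ Γ (.app t a) (Trm.subst1 a B)
  | conv {Γ a A B s} : Typing R Θ sΘ Γ a A → Joinable R A B → Typing R Θ sΘ Γ B s →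
      Trm.IsSort s → Typing R Θ sΘ Γ a B
  | symb (f : F) : Trm.IsSort (sΘ f) → Typing R Θ sΘ [] (Θ f) (sΘ f) →
      Typing R Θ sΘ [] (.sym f) (Θ f)

/-- `→` preserves typing (subject reduction). -/
def PresTyping {F : Type} (R : Rules F) (Θ sΘ : F → Trm F) : Prop :=
  ∀ Γ t u T, Typing R Θ sΘ Γ t T → Red R t u → Typing R Θ sΘ Γ u T

/-- A substitution `γ` is well-typed from `Δ` to `Γ` (for a generic typing judgment `Ty`):
for all `(x : T) ∈ Δ`, `Ty Γ (xγ) (Tγ)`. -/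
def SubstTyped {F : Type} (Ty : List (Trm F) → Trm F → Trm F → Prop)
    (Γ : List (Trm F)) (γ : ℕ → Trm F) (Δ : List (Trm F)) : Prop :=
  ∀ i A, Δ[i]? = some A → Ty Γ (γ i) (Trm.subst (fun j => γ (j + i + 1)) A)

/-! # Interpretation of types as computability predicates -/

/-- `𝕀`: partial functions from terms to sets of terms. -/
abbrev Interp (F : Type) := Trm F → Part (Set (Trm F))

/-- Graph inclusion of partial functions. -/
def InterpLE {F : Type} (I J : Interp F) : Prop := ∀ T S, S ∈ I T → S ∈ J T

/-- `I` is the least fixpoint of `φ` on `𝕀` (ordered by graph inclusion). -/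
def IsLfpInterp {F : Type} (φ : Interp F → Interp F) (I : Interp F) : Prop :=
  φ I = I ∧ ∀ J, φ J = J → InterpLE I J

/-- The domain `D(I)`: terminating terms `T` such that whenever `T →* Πx:A.B`,
`A ∈ dom(I)` and `B[x↦a] ∈ dom(I)` for all `a ∈ I(A)`. -/
def domD {F : Type} (R : Rules F) (I : Interp F) : Set (Trm F) :=
  {T | SN R T ∧ ∀ A B, RedStar R T (.pi A B) →
    (I A).Dom ∧ ∀ S ∈ I A, ∀ a ∈ S, (I (Trm.subst1 a B)).Dom}

/-- `{t | ∀ a ∈ I(A), t a ∈ I(B[x↦a])}` (relational reading of the partial function `I`). -/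
def piPart {F : Type} (I : Interp F) (A B : Trm F) : Set (Trm F) :=
  {t | ∀ S ∈ I A, ∀ a ∈ S, ∀ S' ∈ I (Trm.subst1 a B), Trm.app t a ∈ S'}

open Classical in
/-- The monotone function `F : 𝕀 → 𝕀`: `dom(F(I)) = D(I)`; `F(I)(T) = SN` if the normal
form of `T` is not a product; `F(I)(T) = {t | ∀ a ∈ I(A), t a ∈ I(B[x↦a])}` if the normal
form of `T` is `Πx:A.B`. -/
noncomputable def interpF {F : Type} (R : Rules F) (I : Interp F) : Interp F := fun T =>
  ⟨T ∈ domD R I, fun _ =>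
    if h : ∃ A B, RedStar R T (.pi A B) ∧ NormalForm R (.pi A B) then
      piPart I h.choose h.choose_spec.choose
    else SNset R⟩

/-- The value of a partial interpretation at `T` (as a set). -/
def partMem {F : Type} (I : Interp F) (T : Trm F) : Set (Trm F) := {t | ∀ S ∈ I T, t ∈ S}

open Classical in
/-- The interpretation `⟦T⟧σ` of a term `T` wrt a substitution `σ`, relative to the least
fixpoint `I = ℐ` of `interpF`: `⟦s⟧σ = 𝒟` for `s` a sort;
`⟦Πx:A.K⟧σ = {t | ∀ a ∈ ⟦A⟧σ, t a ∈ ⟦K⟧[x↦a,σ]}` for `K` a kind;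
`⟦T⟧σ = ℐ(Tσ)` if `T` is neither a kind nor `KIND` and `Tσ ∈ 𝒟`; `⟦T⟧σ = SN` otherwise. -/
noncomputable def interp {F : Type} (R : Rules F) (I : Interp F) :
    Trm F → (ℕ → Trm F) → Set (Trm F)
  | .type, _ => domD R I
  | .kind, _ => domD R I
  | .pi A B, σ =>
      if Trm.IsKind B then
        {t | ∀ a ∈ interp R I A σ, Trm.app t a ∈ interp R I B (Trm.scons a σ)}
      else if Trm.subst σ (.pi A B) ∈ domD R I then partMem I (Trm.subst σ (.pi A B))
      else SNset R
  | .var n, σ =>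
      if Trm.subst σ (.var n) ∈ domD R I then partMem I (Trm.subst σ (.var n)) else SNset R
  | .sym g, σ =>
      if Trm.subst σ (.sym g) ∈ domD R I then partMem I (Trm.subst σ (.sym g)) else SNset R
  | .app t u, σ =>
      if Trm.subst σ (.app t u) ∈ domD R I then partMem I (Trm.subst σ (.app t u)) else SNset R
  | .lam A b, σ =>
      if Trm.subst σ (.lam A b) ∈ domD R I then partMem I (Trm.subst σ (.lam A b)) else SNset R

/-- `σ ⊨ Γ`: a substitution is adequate wrt an environment. -/
def Models {F : Type} (R : Rules F) (I : Interp F) (σ : ℕ → Trm F) (Γ : List (Trm F)) : Prop :=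
  ∀ i A, Γ[i]? = some A → σ i ∈ interp R I A (fun j => σ (j + i + 1))

/-- The typing map `Θ` is adequate: `f ∈ ⟦Θ_f⟧` whenever `⊢ Θ_f : s_f` and `Θ_f ∈ ⟦s_f⟧`. -/
def Adequate {F : Type} (R : Rules F) (Θ sΘ : F → Trm F) (I : Interp F) : Prop :=
  ∀ f : F, Typing R Θ sΘ [] (Θ f) (sΘ f) → Θ f ∈ interp R I (sΘ f) Trm.var →
    Trm.sym f ∈ interp R I (Θ f) Trm.var

/-- The substitution `[x⃗ ↦ l⃗]` (where `ls` lists the images of variables `0, 1, …`). -/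
def mkSubst {F : Type} (ls : List (Trm F)) : ℕ → Trm F := fun i =>
  (ls[i]?).getD (.var (i - ls.length))

/-- Composition of substitutions: `x ↦ (xγ)σ`. -/
def compSubst {F : Type} (γ σ : ℕ → Trm F) : ℕ → Trm F := fun i => Trm.subst σ (γ i)

/-- The set `ℂ` of terms `f t⃗` with `|t⃗| = arit(Θ_f)`, `⊢ Θ_f : s_f`, `Θ_f ∈ ⟦s_f⟧` and
`[x⃗↦t⃗] ⊨ Γ_f`. -/
def CC {F : Type} (R : Rules F) (Θ sΘ : F → Trm F) (I : Interp F) : Set (Trm F) :=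
  {t | ∃ (f : F) (ts : List (Trm F)), t = Trm.appList (.sym f) ts ∧
    ts.length = Trm.piArity (Θ f) ∧
    Typing R Θ sΘ [] (Θ f) (sΘ f) ∧ Θ f ∈ interp R I (sΘ f) Trm.var ∧
    Models R I (mkSubst ts.reverse) (Trm.telescope (Θ f))}

/-! # Dependency pairs -/

/-- Occurrences of `p` in a term, not at the root, such that `p` is not further applied
(i.e. `p` collects all the arguments of its head at this occurrence). -/
inductive MaxOccNR {F : Type} (p : Trm F) : Trm F → Prop
  | appL {u v} : MaxOccNR p u → MaxOccNR p (.app u v)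
  | appR {u v} : MaxOccNR p v → MaxOccNR p (.app u v)
  | appRroot {u} : MaxOccNR p (.app u p)
  | piL {A B} : MaxOccNR p A → MaxOccNR p (.pi A B)
  | piLroot {B} : MaxOccNR p (.pi p B)
  | piR {A B} : MaxOccNR p B → MaxOccNR p (.pi A B)
  | piRroot {A} : MaxOccNR p (.pi A p)
  | lamL {A b} : MaxOccNR p A → MaxOccNR p (.lam A b)
  | lamLroot {b} : MaxOccNR p (.lam p b)
  | lamR {A b} : MaxOccNR p b → MaxOccNR p (.lam A b)
  | lamRroot {A} : MaxOccNR p (.lam A p)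

/-- `p` occurs in `t` as a maximal application. -/
def MaxOcc {F : Type} (p t : Trm F) : Prop := t = p ∨ MaxOccNR p t

/-- Dependency pairs: `f l⃗ > g m⃗` iff there is a rule `f l⃗ → r ∈ R`, `g` is defined and
`g m⃗` is a subterm of `r` such that `m⃗` are all the arguments to which `g` is applied. -/
def DepPair {F : Type} (R : Rules F) (f : F) (ls : List (Trm F)) (g : F)
    (ms : List (Trm F)) : Prop :=
  Defined R g ∧ ∃ r, (Trm.appList (.sym f) ls, r) ∈ R ∧ MaxOcc (Trm.appList (.sym g) ms) r

/-- `f t⃗ →arg f u⃗`: reduction of exactly one argument. -/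
def ArgRed {F : Type} (R : Rules F) (t u : Trm F) : Prop :=
  ∃ (f : F) (pre post : List (Trm F)) (a b : Trm F), Red R a b ∧
    t = Trm.appList (.sym f) (pre ++ a :: post) ∧ u = Trm.appList (.sym f) (pre ++ b :: post)

/-- `>ₛ`: the closure of the dependency pair relation by substitution and left-application:
`f t₁…t_p >ₛ g u₁…u_q` iff there are a dependency pair `f l₁…l_i > g m₁…m_j` with `i ≤ p`
and `j ≤ q` and a substitution `σ` such that `t_k →* l_kσ` for `k ≤ i` and `m_kσ = u_k`
for `k ≤ j`. -/
def GTsub {F : Type} (R : Rules F) (t u : Trm F) : Prop :=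
  ∃ (f g : F) (ts us ls ms : List (Trm F)) (σ : ℕ → Trm F),
    t = Trm.appList (.sym f) ts ∧ u = Trm.appList (.sym g) us ∧
    DepPair R f ls g ms ∧ ls.length ≤ ts.length ∧ ms.length ≤ us.length ∧
    (∀ (k : ℕ) (tk lk : Trm F), ts[k]? = some tk → ls[k]? = some lk → RedStar R tk (Trm.subst σ lk)) ∧
    (∀ (k : ℕ) (mk : Trm F), ms[k]? = some mk → us[k]? = some (Trm.subst σ mk))

/-- The call relation `≻̃ = →arg* · >ₛ` on `ℂ`. -/
def CallRel {F : Type} (R : Rules F) (Θ sΘ : F → Trm F) (I : Interp F) (t u : Trm F) : Prop :=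
  t ∈ CC R Θ sΘ I ∧ u ∈ CC R Θ sΘ I ∧
    ∃ v, Relation.ReflTransGen (ArgRed R) t v ∧ GTsub R v u

/-! # Precedence and well-structured systems -/

/-- `f ⪰ g` (one step): `g` occurs in `Θ_f` or in the right-hand side of a rule of `f`. -/
def PrecBase {F : Type} (R : Rules F) (Θ : F → Trm F) (f g : F) : Prop :=
  Subterm (.sym g) (Θ f) ∨
  ∃ (ls : List (Trm F)) (r : Trm F), (Trm.appList (.sym f) ls, r) ∈ R ∧ Subterm (.sym g) r

/-- `⪰`: the smallest quasi-order containing `PrecBase`. -/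
def Preceq {F : Type} (R : Rules F) (Θ : F → Trm F) : F → F → Prop :=
  Relation.ReflTransGen (PrecBase R Θ)

/-- `≻`: the strict part of `⪰`. -/
def Prec {F : Type} (R : Rules F) (Θ : F → Trm F) (f g : F) : Prop :=
  Preceq R Θ f g ∧ ¬ Preceq R Θ g f

/-- The restricted type system `⊢_{≺ f}`: as `Typing`, but function symbols may only be
introduced when strictly smaller than `f` in the precedence. -/
inductive LTyp {F : Type} (R : Rules F) (Θ sΘ : F → Trm F) (f : F) :
    List (Trm F) → Trm F → Trm F → Prop
  | ax : LTyp R Θ sΘ f [] .type .kind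
  | var {Γ A s} : Trm.IsSort s → LTyp R Θ sΘ f Γ A s →
      LTyp R Θ sΘ f (A :: Γ) (.var 0) (Trm.shift A)
  | weak {Γ A s b B} : Trm.IsSort s → LTyp R Θ sΘ f Γ A s → LTyp R Θ sΘ f Γ b B →
      LTyp R Θ sΘ f (A :: Γ) (Trm.shift b) (Trm.shift B)
  | prod {Γ A B s} : Trm.IsSort s → LTyp R Θ sΘ f Γ A .type → LTyp R Θ sΘ f (A :: Γ) B s →
      LTyp R Θ sΘ f Γ (.pi A B) s
  | abs {Γ A b B s} : Trm.IsSort s → LTyp R Θ sΘ f (A :: Γ) b B →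
      LTyp R Θ sΘ f Γ (.pi A B) s → LTyp R Θ sΘ f Γ (.lam A b) (.pi A B)
  | app {Γ t a A B} : LTyp R Θ sΘ f Γ t (.pi A B) → LTyp R Θ sΘ f Γ a A →
      LTyp R Θ sΘ f Γ (.app t a) (Trm.subst1 a B)
  | conv {Γ a A B s} : LTyp R Θ sΘ f Γ a A → Joinable R A B → LTyp R Θ sΘ f Γ B s →
      Trm.IsSort s → LTyp R Θ sΘ f Γ a B
  | symb (g : F) : Prec R Θ f g → Trm.IsSort (sΘ g) → LTyp R Θ sΘ f [] (Θ g) (sΘ g) →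
      LTyp R Θ sΘ f [] (.sym g) (Θ g)

/-- The arguments `y⃗γ = [y₁γ, …, y_jγ]` of an instantiated dependency pair right-hand
side, where `y_j` is de Bruijn variable `0`. -/
def dpArgs {F : Type} (γ : ℕ → Trm F) (j : ℕ) : List (Trm F) :=
  (List.range j).reverse.map γ

/-- The restricted type system `⊢_{f l⃗}` (computability closure): as `Typing`, except that
types are required to be typable using symbols smaller than `f` only, and function symbols
are introduced either as undefined constants or through instances of dependency pairs of
`f l⃗`. -/
inductive RTyp {F : Type} (R : Rules F) (Θ sΘ : F → Trm F) (f : F) (ls : List (Trm F)) :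
    List (Trm F) → Trm F → Trm F → Prop
  | ax : RTyp R Θ sΘ f ls [] .type .kind
  | var {Γ A s} : Trm.IsSort s → LTyp R Θ sΘ f Γ A s →
      RTyp R Θ sΘ f ls (A :: Γ) (.var 0) (Trm.shift A)
  | weak {Γ A s b B} : Trm.IsSort s → LTyp R Θ sΘ f Γ A s → RTyp R Θ sΘ f ls Γ b B →
      RTyp R Θ sΘ f ls (A :: Γ) (Trm.shift b) (Trm.shift B)
  | prod {Γ A B s} : Trm.IsSort s → RTyp R Θ sΘ f ls Γ A .type →
      RTyp R Θ sΘ f ls (A :: Γ) B s → RTyp R Θ sΘ f ls Γ (.pi A B) s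
  | abs {Γ A b B s} : Trm.IsSort s → RTyp R Θ sΘ f ls (A :: Γ) b B →
      LTyp R Θ sΘ f Γ (.pi A B) s → RTyp R Θ sΘ f ls Γ (.lam A b) (.pi A B)
  | app {Γ t a A B s} : Trm.IsSort s → RTyp R Θ sΘ f ls Γ t (.pi A B) →
      RTyp R Θ sΘ f ls Γ a A → LTyp R Θ sΘ f Γ (.pi A B) s →
      RTyp R Θ sΘ f ls Γ (.app t a) (Trm.subst1 a B)
  | conv {Γ a A B s s'} : Trm.IsSort s → Trm.IsSort s' → RTyp R Θ sΘ f ls Γ a A →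
      Joinable R A B → LTyp R Θ sΘ f Γ B s → LTyp R Θ sΘ f Γ A s' →
      RTyp R Θ sΘ f ls Γ a B
  | dp {Γ : List (Trm F)} (g : F) (γ : ℕ → Trm F) (j : ℕ) :
      j ≤ Trm.piArity (Θ g) → Trm.IsSort (sΘ g) → LTyp R Θ sΘ f [] (Θ g) (sΘ g) →
      (∀ i A, (Trm.teleN j (Θ g))[i]? = some A →
        RTyp R Θ sΘ f ls Γ (γ i) (Trm.subst (fun k => γ (k + i + 1)) A)) →
      DepPair R f ls g (dpArgs γ j) →
      RTyp R Θ sΘ f ls Γ (Trm.appList (.sym g) (dpArgs γ j)) (Trm.subst γ (Trm.piCodN j (Θ g)))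
  | const (g : F) : ¬ Defined R g → Trm.IsSort (sΘ g) → LTyp R Θ sΘ f [] (Θ g) (sΘ g) →
      RTyp R Θ sΘ f ls [] (.sym g) (Θ g)

/-- `R` is well-structured (wrt the assignment `Δ` of an environment to every rule):
(a) `≻` is well-founded; (b) `|l⃗| ≤ arit(Θ_f)` for every rule `f l⃗ → r`;
(c) `|m⃗| ≤ arit(Θ_g)` for every dependency pair `f l⃗ > g m⃗`;
(d) `Δ_{f l⃗→r} ⊢_{f l⃗} r : U[x⃗↦l⃗]` for every rule `f l⃗ → r`, where `Θ_f = Πx⃗:T⃗.U`. -/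
def WellStructured {F : Type} (R : Rules F) (Θ sΘ : F → Trm F)
    (Δ : Trm F → Trm F → List (Trm F)) : Prop :=
  WellFounded (fun g f => Prec R Θ f g) ∧
  (∀ l r, (l, r) ∈ R → ∀ (f : F) ls, l = Trm.appList (.sym f) ls →
    ls.length ≤ Trm.piArity (Θ f)) ∧
  (∀ (f : F) ls (g : F) ms, DepPair R f ls g ms → ms.length ≤ Trm.piArity (Θ g)) ∧
  (∀ l r, (l, r) ∈ R → ∀ (f : F) ls, l = Trm.appList (.sym f) ls →
    RTyp R Θ sΘ f ls (Δ l r) r (Trm.subst (mkSubst ls.reverse) (Trm.piCodN ls.length (Θ f))))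

/-- `R` is accessible: for every rule `f l⃗ → r` with `Θ_f = Πx⃗:T⃗.U`, `|x⃗| = |l⃗|`, and
every substitution `σ`, `σ ⊨ Δ_{f l⃗→r}` whenever `⊢ Θ_f : s_f`, `Θ_f ∈ ⟦s_f⟧` and
`[x⃗↦l⃗]σ ⊨ x⃗:T⃗`. -/
def Accessible {F : Type} (R : Rules F) (Θ sΘ : F → Trm F) (I : Interp F)
    (Δ : Trm F → Trm F → List (Trm F)) : Prop :=
  ∀ l r, (l, r) ∈ R → ∀ (f : F) ls, l = Trm.appList (.sym f) ls → ∀ σ : ℕ → Trm F,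
    Typing R Θ sΘ [] (Θ f) (sΘ f) → Θ f ∈ interp R I (sΘ f) Trm.var →
    Models R I (compSubst (mkSubst ls.reverse) σ) (Trm.teleN ls.length (Θ f)) →
    Models R I σ (Δ l r)

/-- A term in `𝕂 ∪ {KIND}`. -/
def IsKindLike {F : Type} (t : Trm F) : Prop := Trm.IsKind t ∨ t = .kind

/-- `R` is plain function-passing (PFP): for every rule `f l⃗ → r` with `Θ_f = Πx⃗:T⃗.U` and
`|x⃗| = |l⃗|`, no `l_i` is a kind or `KIND`, and every `(y : T) ∈ Δ_{f l⃗→r}` satisfies: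
either there is `i` with `y = l_i` and `T = T_i[x⃗↦l⃗]`, or `y ∈ FV(l_i)` and `T = D t⃗`
with `D` undefined and `|t⃗| = arit(Θ_D)`. -/
def PFP {F : Type} (R : Rules F) (Θ : F → Trm F) (Δ : Trm F → Trm F → List (Trm F)) : Prop :=
  ∀ l r, (l, r) ∈ R → ∀ (f : F) ls, l = Trm.appList (.sym f) ls →
    (∀ li ∈ ls, ¬ IsKindLike li) ∧
    (∀ i A, (Δ l r)[i]? = some A →
      (∃ (k : ℕ) (Tk : Trm F), ls[k]? = some (Trm.var i) ∧ (Trm.piDoms (Θ f))[k]? = some Tk ∧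
        Trm.rename (fun j => j + i + 1) A = Trm.subst (mkSubst ((ls.take k).reverse)) Tk) ∨
      ((∃ (k : ℕ) (lk : Trm F), ls[k]? = some lk ∧ i ∈ Trm.FV lk) ∧
        ∃ (D : F) (ts : List (Trm F)), Trm.rename (fun j => j + i + 1) A =
          Trm.appList (.sym D) ts ∧ ¬ Defined R D ∧ ts.length = Trm.piArity (Θ D)))

/-! # Size-change termination -/

/-- Entries of size-change matrices: `−1`, `0` or `∞`. -/
inductive SCTe : Type
  | minusOne : SCTe
  | zero : SCTe
  | infty : SCTe
deriving DecidableEq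

/-- Min-plus multiplication of entries (addition, truncated at `−1`). -/
def SCTe.comp : SCTe → SCTe → SCTe
  | .infty, _ => .infty
  | _, .infty => .infty
  | .minusOne, _ => .minusOne
  | _, .minusOne => .minusOne
  | .zero, .zero => .zero

/-- Minimum of entries (`−1 < 0 < ∞`). -/
def SCTe.min : SCTe → SCTe → SCTe
  | .minusOne, _ => .minusOne
  | _, .minusOne => .minusOne
  | .zero, _ => .zero
  | .infty, x => x

/-- Base of the relation `⊵`: `f t₁…t_n ⊵ t_i` for `f ∈ F`. -/
def ArgSubBase {F : Type} (t u : Trm F) : Prop :=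
  ∃ (f : F) (ts : List (Trm F)), t = Trm.appList (.sym f) ts ∧ u ∈ ts

/-- `⊵`: the smallest transitive relation such that `f t₁…t_n ⊵ t_i` for `f ∈ F`. -/
def ArgGT {F : Type} : Trm F → Trm F → Prop := Relation.TransGen ArgSubBase

open Classical in
/-- The size-change matrix of a dependency pair `f l₁…l_p > g m₁…m_q`:
`a_{ij} = −1` if `l_i ⊵ m_j`, `a_{ij} = 0` if `l_i = m_j`, `a_{ij} = ∞` otherwise
(in particular if `i > p` or `j > q`). -/
noncomputable def dpMatrix {F : Type} (ls ms : List (Trm F)) : ℕ → ℕ → SCTe := fun i j =>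
  match ls[i]?, ms[j]? with
  | some li, some mj =>
      if ArgGT li mj then .minusOne else if li = mj then .zero else .infty
  | _, _ => .infty

/-- Min-plus product of matrices, the middle dimension being `d`. -/
def matComp (d : ℕ) (M N : ℕ → ℕ → SCTe) : ℕ → ℕ → SCTe := fun i j =>
  ((List.range d).map fun k => (M i k).comp (N k j)).foldr SCTe.min .infty

/-- The transitive closure of the call graph of `R`: edges are labeled by the matrices of
the dependency pairs, multiplied in the min-plus semiring along paths. -/
inductive TCEdge {F : Type} (R : Rules F) (Θ : F → Trm F) : F → F → (ℕ → ℕ → SCTe) → Prop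
  | base {f g : F} {ls ms : List (Trm F)} : DepPair R f ls g ms →
      TCEdge R Θ f g (dpMatrix ls ms)
  | comp {f g h : F} {M N : ℕ → ℕ → SCTe} : TCEdge R Θ f g M → TCEdge R Θ g h N →
      TCEdge R Θ f h (matComp (Trm.piArity (Θ g)) M N)

/-- `R` is size-change terminating: in the transitive closure of the call graph, every
idempotent matrix labeling a loop has some `−1` on its diagonal. -/
def SCT {F : Type} (R : Rules F) (Θ : F → Trm F) : Prop :=
  ∀ (f : F) (M : ℕ → ℕ → SCTe), TCEdge R Θ f f M → matComp (Trm.piArity (Θ f)) M M = M →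
    ∃ i < Trm.piArity (Θ f), M i i = SCTe.minusOne

/-! # Substitution calculus -/

namespace Trm

variable {F : Type}

theorem up_var_comp (ρ : ℕ → ℕ) : up (fun i => (var (ρ i) : Trm F)) = fun i => var (upRen ρ i) := by
  funext i; cases i <;> rfl

theorem rename_eq_subst (ρ : ℕ → ℕ) (t : Trm F) : rename ρ t = subst (fun i => var (ρ i)) t := by
  induction t generalizing ρ <;> simp_all [rename, subst, up_var_comp]

theorem up_comp_upRen (σ : ℕ → Trm F) (ρ : ℕ → ℕ) :
    (fun i => up σ (upRen ρ i)) = up (fun i => σ (ρ i)) := by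
  funext i; cases i <;> rfl

theorem subst_rename (σ : ℕ → Trm F) (ρ : ℕ → ℕ) (t : Trm F) :
    subst σ (rename ρ t) = subst (fun i => σ (ρ i)) t := by
  induction t generalizing σ ρ <;> simp_all [rename, subst, up_comp_upRen]

theorem rename_up (σ : ℕ → Trm F) (ρ : ℕ → ℕ) :
    (fun i => rename (upRen ρ) (up σ i)) = up (fun i => rename ρ (σ i)) := by
  funext i
  cases i with
  | zero => rfl
  | succ n =>
    simp only [up]
    rw [rename_eq_subst (upRen ρ), subst_rename, rename_eq_subst Nat.succ (rename ρ _),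
      subst_rename]
    rfl

theorem rename_subst (σ : ℕ → Trm F) (ρ : ℕ → ℕ) (t : Trm F) :
    rename ρ (subst σ t) = subst (fun i => rename ρ (σ i)) t := by
  induction t generalizing σ ρ <;> simp_all [rename, subst, rename_up]

theorem subst_up (σ τ : ℕ → Trm F) :
    (fun i => subst (up τ) (up σ i)) = up (fun i => subst τ (σ i)) := by
  funext i
  cases i with
  | zero => rfl
  | succ n =>
    simp only [up]
    rw [subst_rename, rename_subst]
    rfl

theorem subst_subst (σ τ : ℕ → Trm F) (t : Trm F) :
    subst τ (subst σ t) = subst (fun i => subst τ (σ i)) t := by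
  induction t generalizing σ τ <;> simp_all [subst, subst_up]

theorem up_var : up (var : ℕ → Trm F) = var := by
  funext i; cases i <;> rfl

theorem subst_var (t : Trm F) : subst var t = t := by
  induction t <;> simp_all [subst, up_var]

theorem subst1_subst_up (a : Trm F) (σ : ℕ → Trm F) (t : Trm F) :
    subst1 a (subst (up σ) t) = subst (scons a σ) t := by
  rw [subst1, subst_subst]
  congr 1
  funext i
  cases i with
  | zero => rfl
  | succ n =>
    simp only [up, subst_rename, scons]
    exact subst_var _

theorem subst_scons_comp (σ τ : ℕ → Trm F) (a : Trm F) :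
    (fun i => subst σ (scons a τ i)) = scons (subst σ a) (fun i => subst σ (τ i)) := by
  funext i; cases i <;> rfl

theorem subst_subst1 (σ : ℕ → Trm F) (a t : Trm F) :
    subst σ (subst1 a t) = subst (scons (subst σ a) σ) t := by
  rw [subst1, subst_subst, subst_scons_comp]
  rfl

theorem subst_up_scons (τ σ : ℕ → Trm F) (a : Trm F) :
    (fun i => subst (scons a σ) (up τ i)) = scons a (fun i => subst σ (τ i)) := by
  funext i
  cases i with
  | zero => rfl
  | succ n => simp only [up, subst_rename, scons]

theorem subst_congr_FV {σ τ : ℕ → Trm F} {t : Trm F} (h : ∀ i ∈ FV t, σ i = τ i) :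
    subst σ t = subst τ t := by
  have hup : ∀ {σ τ : ℕ → Trm F} {t : Trm F}, (∀ i, i + 1 ∈ FV t → σ i = τ i) →
      ∀ i ∈ FV t, up σ i = up τ i := by
    intro σ τ t h i hi
    cases i with
    | zero => rfl
    | succ n => simp only [up]; rw [h n hi]
  induction t generalizing σ τ with
  | type => rfl
  | kind => rfl
  | sym f => rfl
  | var n => exact h n rfl
  | pi A B ihA ihB | lam A B ihA ihB =>
    simp only [subst]
    rw [ihA fun i hi => h i (Or.inl hi), ihB (hup fun i hi => h i (Or.inr hi))]
  | app t u iht ihu =>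
    simp only [subst]
    rw [iht fun i hi => h i (Or.inl hi), ihu fun i hi => h i (Or.inr hi)]

theorem FV_rename (ρ : ℕ → ℕ) (t : Trm F) : FV (rename ρ t) = ρ '' FV t := by
  have hup : ∀ (ρ : ℕ → ℕ) (S : Set ℕ),
      {n | n + 1 ∈ upRen ρ '' S} = ρ '' {n | n + 1 ∈ S} := by
    intro ρ S
    ext n
    constructor
    · rintro ⟨i, hi, he⟩
      cases i with
      | zero => simp [upRen] at he
      | succ m => exact ⟨m, hi, by simpa [upRen] using he⟩
    · rintro ⟨m, hm, rfl⟩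
      exact ⟨m + 1, hm, rfl⟩
  induction t generalizing ρ <;> simp_all [rename, FV, Set.image_union]

/-- The head of an application spine. -/
def spineHead : Trm F → Trm F
  | .app t _ => spineHead t
  | t => t

/-- The number of arguments of an application spine. -/
def spineLength : Trm F → ℕ
  | .app t _ => spineLength t + 1
  | _ => 0

theorem spineHead_appList (h : Trm F) (vs : List (Trm F)) :
    spineHead (appList h vs) = spineHead h := by
  induction vs generalizing h with
  | nil => rfl
  | cons a vs ih => exact ih _

theorem spineLength_appList (h : Trm F) (vs : List (Trm F)) :
    spineLength (appList h vs) = spineLength h + vs.length := by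
  induction vs generalizing h with
  | nil => rfl
  | cons a vs ih =>
    rw [appList, ih, spineLength, List.length_cons]
    omega

theorem appList_concat (h a : Trm F) (vs : List (Trm F)) :
    appList h (vs ++ [a]) = .app (appList h vs) a := by
  induction vs generalizing h with
  | nil => rfl
  | cons b vs ih => exact ih _

theorem subst_appList (σ : ℕ → Trm F) (h : Trm F) (vs : List (Trm F)) :
    subst σ (appList h vs) = appList (subst σ h) (vs.map (subst σ)) := by
  induction vs generalizing h with
  | nil => rfl
  | cons b vs ih => exact ih _

theorem isKind_subst_iff {τ : ℕ → Trm F} (hτ : ∀ i, ¬ IsKind (τ i)) (t : Trm F) :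
    IsKind (subst τ t) ↔ IsKind t := by
  induction t generalizing τ with
  | pi A B _ ihB =>
    refine ihB ?_
    rintro (_ | n)
    · exact id
    · simp only [up]
      have := hτ n
      revert this
      generalize τ n = u
      contrapose
      generalize Nat.succ = ρ
      induction u generalizing ρ with
      | pi _ _ _ ih => exact ih _
      | _ => exact id
  | var n => exact iff_of_false (hτ n) id
  | _ => exact Iff.rfl

theorem isKind_rename_iff (ρ : ℕ → ℕ) (t : Trm F) : IsKind (rename ρ t) ↔ IsKind t := by
  rw [rename_eq_subst]
  exact isKind_subst_iff (fun _ => id) t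

theorem rename_eq_kind {ρ : ℕ → ℕ} {t : Trm F} (h : rename ρ t = .kind) : t = .kind := by
  cases t <;> simp_all [rename]

end Trm

/-! # Reduction -/

section Reduction

variable {F : Type} {R : Rules F}

theorem Red.subst {t u : Trm F} (h : Red R t u) (σ : ℕ → Trm F) :
    Red R (t.subst σ) (u.subst σ) := by
  induction h generalizing σ with
  | beta A b a =>
    have := Red.beta (R := R) (A.subst σ) (b.subst (Trm.up σ)) (a.subst σ)
    rwa [Trm.subst1_subst_up, ← Trm.subst_subst1] at this
  | rule τ hR =>
    rw [Trm.subst_subst, Trm.subst_subst]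
    exact .rule _ hR
  | appL _ ih => exact .appL (ih σ)
  | appR _ ih => exact .appR (ih σ)
  | piL _ ih => exact .piL (ih σ)
  | piR _ ih => exact .piR (ih _)
  | lamL _ ih => exact .lamL (ih σ)
  | lamR _ ih => exact .lamR (ih _)

theorem RedStar.lift {t u : Trm F} (g : Trm F → Trm F) (hg : ∀ a b, Red R a b → Red R (g a) (g b))
    (h : RedStar R t u) : RedStar R (g t) (g u) := by
  induction h with
  | refl => exact .refl
  | tail _ h ih => exact ih.tail (hg _ _ h)

theorem RedStar.subst {t u : Trm F} (h : RedStar R t u) (σ : ℕ → Trm F) :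
    RedStar R (t.subst σ) (u.subst σ) :=
  h.lift _ fun _ _ h => h.subst σ

theorem RedStar.pi {A A' B B' : Trm F} (hA : RedStar R A A') (hB : RedStar R B B') :
    RedStar R (.pi A B) (.pi A' B') :=
  (hA.lift (Trm.pi · B) fun _ _ => .piL).trans (hB.lift (Trm.pi A' ·) fun _ _ => .piR)

theorem RedStar.app {t t' u u' : Trm F} (ht : RedStar R t t') (hu : RedStar R u u') :
    RedStar R (.app t u) (.app t' u') :=
  (ht.lift (Trm.app · u) fun _ _ => .appL).trans (hu.lift (Trm.app t' ·) fun _ _ => .appR)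

theorem RedStar.lam {A A' b b' : Trm F} (hA : RedStar R A A') (hb : RedStar R b b') :
    RedStar R (.lam A b) (.lam A' b') :=
  (hA.lift (Trm.lam · b) fun _ _ => .lamL).trans (hb.lift (Trm.lam A' ·) fun _ _ => .lamR)

theorem redStar_subst_of_pointwise {σ τ : ℕ → Trm F} (h : ∀ i, RedStar R (σ i) (τ i))
    (t : Trm F) : RedStar R (t.subst σ) (t.subst τ) := by
  have hup : ∀ {σ τ : ℕ → Trm F}, (∀ i, RedStar R (σ i) (τ i)) →
      ∀ i, RedStar R (Trm.up σ i) (Trm.up τ i) := by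
    rintro σ τ h (_ | n)
    · exact .refl
    · simp only [Trm.up, Trm.rename_eq_subst]
      exact (h n).subst _
  induction t generalizing σ τ with
  | var n => exact h n
  | pi A B ihA ihB => exact .pi (ihA h) (ihB (hup h))
  | lam A B ihA ihB => exact .lam (ihA h) (ihB (hup h))
  | app A B ihA ihB => exact .app (ihA h) (ihB h)
  | _ => exact .refl

theorem redStar_scons {a a' : Trm F} (h : RedStar R a a') {σ τ : ℕ → Trm F}
    (hσ : ∀ i, RedStar R (σ i) (τ i)) (i : ℕ) :
    RedStar R (Trm.scons a σ i) (Trm.scons a' τ i) := by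
  cases i with
  | zero => exact h
  | succ n => exact hσ n

theorem redStar_subst1 {a a' : Trm F} (h : RedStar R a a') (t : Trm F) :
    RedStar R (Trm.subst1 a t) (Trm.subst1 a' t) :=
  redStar_subst_of_pointwise (redStar_scons h fun _ => .refl) t

theorem SN.of_subst {σ : ℕ → Trm F} {t : Trm F} (h : SN R (t.subst σ)) : SN R t := by
  unfold SN at *
  generalize hu : t.subst σ = u at h
  induction h generalizing t with
  | intro u _ ih => exact .intro _ fun t' ht' => ih _ (hu ▸ ht'.subst σ) rfl

theorem SN.redStar {t u : Trm F} (ht : SN R t) (h : RedStar R t u) : SN R u := by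
  induction h with
  | refl => exact ht
  | tail _ h ih => exact ih.inv h

/-- The left-hand side of a rule instance is an application spine headed by the same symbol and
with as many arguments as the left-hand side of the rule. -/
theorem IsRewriteSystem.exists_spine (hRS : IsRewriteSystem R) {l r : Trm F} (h : (l, r) ∈ R)
    (σ : ℕ → Trm F) : ∃ (f : F) (ls : List (Trm F)), (Trm.appList (.sym f) ls, r) ∈ R ∧
      (l.subst σ).spineHead = .sym f ∧ (l.subst σ).spineLength = ls.length := by
  obtain ⟨f, ls, rfl⟩ := (hRS _ h).2
  refine ⟨f, ls, h, ?_, ?_⟩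
  · rw [Trm.subst_appList, Trm.spineHead_appList]; rfl
  · rw [Trm.subst_appList, Trm.spineLength_appList]; simp [Trm.subst, Trm.spineLength]

theorem Red.pi_inv (hRS : IsRewriteSystem R) {A B u : Trm F} (h : Red R (.pi A B) u) :
    (∃ A', u = .pi A' B ∧ Red R A A') ∨ (∃ B', u = .pi A B' ∧ Red R B B') := by
  generalize ht : Trm.pi A B = t at h
  cases h with
  | rule σ hR =>
    obtain ⟨f, ls, -, h, -⟩ := hRS.exists_spine hR σ
    rw [← ht] at h
    simp [Trm.spineHead] at h
  | piL h => cases ht; exact .inl ⟨_, rfl, h⟩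
  | piR h => cases ht; exact .inr ⟨_, rfl, h⟩
  | _ => cases ht

theorem RedStar.pi_inv (hRS : IsRewriteSystem R) {A B u : Trm F} (h : RedStar R (.pi A B) u) :
    ∃ A' B', u = .pi A' B' ∧ RedStar R A A' ∧ RedStar R B B' := by
  induction h with
  | refl => exact ⟨A, B, rfl, .refl, .refl⟩
  | tail _ h ih =>
    obtain ⟨A', B', rfl, hA, hB⟩ := ih
    obtain ⟨A'', rfl, hA'⟩ | ⟨B'', rfl, hB'⟩ := h.pi_inv hRS
    · exact ⟨_, _, rfl, hA.tail hA', hB⟩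
    · exact ⟨_, _, rfl, hA, hB.tail hB'⟩

theorem normalForm_of_sort_or_var (hRS : IsRewriteSystem R) {t : Trm F}
    (ht : t = .type ∨ t = .kind ∨ ∃ n, t = .var n) : NormalForm R t := by
  intro u h
  cases h with
  | rule σ hR =>
    obtain ⟨f, ls, -, h, -⟩ := hRS.exists_spine hR σ
    obtain ht | ht | ⟨n, ht⟩ := ht <;> rw [ht] at h <;> simp [Trm.spineHead] at h
  | _ => simp at ht

theorem NormalForm.sn {t : Trm F} (h : NormalForm R t) : SN R t :=
  .intro _ fun u hu => (h u hu).elim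

theorem NormalForm.eq_of_redStar {t u : Trm F} (h : NormalForm R t) (hu : RedStar R t u) :
    u = t := by
  obtain rfl | ⟨v, hv, -⟩ := hu.cases_head
  · rfl
  · exact (h _ hv).elim

theorem SN.exists_normalForm {t : Trm F} (h : SN R t) : ∃ u, RedStar R t u ∧ NormalForm R u := by
  induction h with
  | intro t _ ih =>
    by_cases hn : NormalForm R t
    · exact ⟨t, .refl, hn⟩
    · simp only [NormalForm, not_forall, not_not] at hn
      obtain ⟨u, hu⟩ := hn
      obtain ⟨v, hv, hn⟩ := ih u hu
      exact ⟨v, hv.head hu, hn⟩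

/-- Newman's lemma, localized at a terminating term. -/
theorem SN.confluent (hconf : LocallyConfluent R) {t u v : Trm F} (ht : SN R t)
    (hu : RedStar R t u) (hv : RedStar R t v) : Joinable R u v := by
  induction ht generalizing u v with
  | intro t _ ih =>
    obtain rfl | ⟨u₁, hu₁, hu⟩ := hu.cases_head
    · exact ⟨v, hv, .refl⟩
    obtain rfl | ⟨v₁, hv₁, hv⟩ := hv.cases_head
    · exact ⟨u, .refl, hu.head hu₁⟩
    obtain ⟨w, huw, hvw⟩ := hconf _ _ _ hu₁ hv₁
    obtain ⟨x, hux, hwx⟩ := ih _ hu₁ hu huw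
    obtain ⟨y, hvy, hxy⟩ := ih _ hv₁ hv (hvw.trans hwx)
    exact ⟨y, hux.trans hxy, hvy⟩

end Reduction

/-! # Metatheory of typing -/

section TypingMetatheory

variable {F : Type} {R : Rules F} {Θ sΘ : F → Trm F}

theorem Trm.IsSort.subst_eq {s : Trm F} (hs : s.IsSort) (σ : ℕ → Trm F) : s.subst σ = s := by
  obtain rfl | rfl := hs <;> rfl

theorem Joinable.subst {t u : Trm F} (h : Joinable R t u) (σ : ℕ → Trm F) :
    Joinable R (t.subst σ) (u.subst σ) := by
  obtain ⟨v, ht, hu⟩ := h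
  exact ⟨_, ht.subst σ, hu.subst σ⟩

theorem Typing.type_kind {Γ : List (Trm F)} {t T : Trm F} (h : Typing R Θ sΘ Γ t T) :
    Typing R Θ sΘ Γ .type .kind := by
  induction h with
  | ax => exact .ax
  | var hs hA ih => exact .weak hs hA ih
  | weak hs hA _ ih _ => exact .weak hs hA ih
  | prod _ _ _ ih _ => exact ih
  | abs _ _ _ _ ih => exact ih
  | app _ _ ih _ => exact ih
  | conv _ _ _ _ ih _ => exact ih
  | symb f _ _ ih => exact ih

theorem Typing.context_head {A : Trm F} {Γ : List (Trm F)} {t T : Trm F}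
    (h : Typing R Θ sΘ (A :: Γ) t T) : ∃ s, Trm.IsSort s ∧ Typing R Θ sΘ Γ A s := by
  generalize hΔ : A :: Γ = Δ at h
  induction h with
  | ax => cases hΔ
  | var hs hA => cases hΔ; exact ⟨_, hs, hA⟩
  | weak hs hA => cases hΔ; exact ⟨_, hs, hA⟩
  | prod _ _ _ ih _ => exact ih hΔ
  | abs _ _ _ _ ih => exact ih hΔ
  | app _ _ ih _ => exact ih hΔ
  | conv _ _ _ _ ih _ => exact ih hΔ
  | symb => cases hΔ

theorem Typing.FV_lt {Γ : List (Trm F)} {t T : Trm F} (h : Typing R Θ sΘ Γ t T) :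
    ∀ i ∈ t.FV, i < Γ.length := by
  induction h with
  | ax => simp [Trm.FV]
  | var _ _ _ => simp [Trm.FV]
  | weak _ _ _ _ ih =>
    simp only [Trm.shift, Trm.FV_rename]
    rintro _ ⟨i, hi, rfl⟩
    simpa using ih i hi
  | prod _ _ _ ihA ihB =>
    rintro i (hi | hi)
    · exact ihA i hi
    · simpa using ihB _ hi
  | abs _ _ _ ihb ihP =>
    rintro i (hi | hi)
    · exact ihP i (.inl hi)
    · simpa using ihb _ hi
  | app _ _ iht iha =>
    rintro i (hi | hi)
    · exact iht i hi
    · exact iha i hi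
  | conv _ _ _ _ ih _ => exact ih
  | symb => simp [Trm.FV]

theorem Typing.subst_eq_of_nil {t T : Trm F} (h : Typing R Θ sΘ [] t T) (σ : ℕ → Trm F) :
    t.subst σ = t := by
  conv_rhs => rw [← Trm.subst_var t]
  exact Trm.subst_congr_FV fun i hi => absurd (h.FV_lt i hi) (Nat.not_lt_zero i)

theorem Typing.symb_weakening {f : F} (hs : Trm.IsSort (sΘ f))
    (h : Typing R Θ sΘ [] (Θ f) (sΘ f)) {Γ : List (Trm F)} (hΓ : Typing R Θ sΘ Γ .type .kind) :
    Typing R Θ sΘ Γ (.sym f) (Θ f) := by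
  induction Γ with
  | nil => exact .symb f hs h
  | cons A Γ ih =>
    obtain ⟨s, hs', hA⟩ := hΓ.context_head
    have := Typing.weak hs' hA (ih hA.type_kind)
    rwa [Trm.shift, Trm.rename_eq_subst _ (Θ f), h.subst_eq_of_nil] at this

theorem SubstTyped.up {Γ Δ : List (Trm F)} {σ : ℕ → Trm F} {A s : Trm F}
    (hσ : SubstTyped (Typing R Θ sΘ) Γ σ Δ) (hs : s.IsSort)
    (hA : Typing R Θ sΘ Γ (A.subst σ) s) :
    SubstTyped (Typing R Θ sΘ) (A.subst σ :: Γ) (Trm.up σ) (A :: Δ) := by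
  rintro (_ | i) B hB
  · cases hB
    have := Typing.var hs hA
    rwa [Trm.shift, Trm.rename_subst] at this
  · have := Typing.weak hs hA (hσ i B hB)
    rwa [Trm.shift, Trm.rename_subst] at this

theorem SubstTyped.tail {Ty : List (Trm F) → Trm F → Trm F → Prop} {Γ Δ : List (Trm F)}
    {σ : ℕ → Trm F} {A : Trm F} (hσ : SubstTyped Ty Γ σ (A :: Δ)) :
    SubstTyped Ty Γ (fun i => σ (i + 1)) Δ := by
  intro i B hB
  exact hσ (i + 1) B hB

/-- The substitution lemma, together with the typability of substituted context heads. -/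
theorem Typing.subst_aux {Δ : List (Trm F)} {t T : Trm F} (h : Typing R Θ sΘ Δ t T) :
    (∀ (Γ : List (Trm F)) (σ : ℕ → Trm F), Typing R Θ sΘ Γ .type .kind →
      SubstTyped (Typing R Θ sΘ) Γ σ Δ → Typing R Θ sΘ Γ (t.subst σ) (T.subst σ)) ∧
    (∀ (A : Trm F) (Δ' : List (Trm F)), Δ = A :: Δ' → ∀ (Γ : List (Trm F)) (σ : ℕ → Trm F),
      Typing R Θ sΘ Γ .type .kind → SubstTyped (Typing R Θ sΘ) Γ σ Δ' →
      ∃ s, Trm.IsSort s ∧ Typing R Θ sΘ Γ (A.subst σ) s) := by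
  induction h with
  | ax => exact ⟨fun _ _ hΓ _ => hΓ, by simp⟩
  | @var Δ A s hs hA ih =>
    refine ⟨fun Γ σ hΓ hσ => ?_, ?_⟩
    · rw [Trm.shift, Trm.subst_rename]
      exact hσ 0 A rfl
    · rintro _ _ ⟨⟩ Γ σ hΓ hσ
      exact ⟨s, hs, hs.subst_eq σ ▸ ih.1 Γ σ hΓ hσ⟩
  | @weak Δ A s b B hs hA hb ihA ihb =>
    refine ⟨fun Γ σ hΓ hσ => ?_, ?_⟩
    · rw [Trm.shift, Trm.subst_rename, Trm.subst_rename]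
      exact ihb.1 Γ _ hΓ hσ.tail
    · rintro _ _ ⟨⟩ Γ σ hΓ hσ
      exact ⟨s, hs, hs.subst_eq σ ▸ ihA.1 Γ σ hΓ hσ⟩
  | @prod Δ A B s hs hA hB ihA ihB =>
    refine ⟨fun Γ σ hΓ hσ => ?_, ihA.2⟩
    have hA' := ihA.1 Γ σ hΓ hσ
    have hB' := ihB.1 _ _ (.weak (.inl rfl) hA' hΓ) (hσ.up (.inl rfl) hA')
    rw [hs.subst_eq] at hB' ⊢
    exact .prod hs hA' hB'
  | @abs Δ A b B s hs hb hP ihb ihP =>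
    refine ⟨fun Γ σ hΓ hσ => ?_, ihP.2⟩
    obtain ⟨s', hs', hA'⟩ := ihb.2 _ _ rfl Γ σ hΓ hσ
    have hb' := ihb.1 _ _ (.weak hs' hA' hΓ) (hσ.up hs' hA')
    exact .abs hs hb' (hs.subst_eq σ ▸ ihP.1 Γ σ hΓ hσ)
  | @app Δ t a A B ht ha iht iha =>
    refine ⟨fun Γ σ hΓ hσ => ?_, iht.2⟩
    have := Typing.app (iht.1 Γ σ hΓ hσ) (iha.1 Γ σ hΓ hσ)
    rwa [Trm.subst1_subst_up, ← Trm.subst_subst1] at this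
  | conv ha hj hB hs iha ihB =>
    exact ⟨fun Γ σ hΓ hσ => .conv (iha.1 Γ σ hΓ hσ) (hj.subst σ)
      (hs.subst_eq σ ▸ ihB.1 Γ σ hΓ hσ) hs, iha.2⟩
  | symb f hs hf ih =>
    refine ⟨fun Γ σ hΓ _ => ?_, by simp⟩
    rw [hf.subst_eq_of_nil]
    exact .symb_weakening hs hf hΓ

theorem Typing.subst {Γ Δ : List (Trm F)} {t T : Trm F} {σ : ℕ → Trm F}
    (h : Typing R Θ sΘ Δ t T) (hΓ : Typing R Θ sΘ Γ .type .kind)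
    (hσ : SubstTyped (Typing R Θ sΘ) Γ σ Δ) : Typing R Θ sΘ Γ (t.subst σ) (T.subst σ) :=
  h.subst_aux.1 Γ σ hΓ hσ

theorem SubstTyped.weaken {Γ Δ : List (Trm F)} {σ : ℕ → Trm F} {A s : Trm F}
    (hσ : SubstTyped (Typing R Θ sΘ) Γ σ Δ) (hs : s.IsSort) (hA : Typing R Θ sΘ Γ A s) :
    SubstTyped (Typing R Θ sΘ) (A :: Γ) (fun i => (σ i).shift) Δ := by
  intro i B hB
  have := Typing.weak hs hA (hσ i B hB)
  rwa [Trm.shift, Trm.rename_subst] at this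

theorem SubstTyped.id {Γ : List (Trm F)} (hΓ : Typing R Θ sΘ Γ .type .kind) :
    SubstTyped (Typing R Θ sΘ) Γ .var Γ := by
  induction Γ with
  | nil => intro i A h; simp at h
  | cons A Γ ih =>
    obtain ⟨s, hs, hA⟩ := hΓ.context_head
    have := (ih hA.type_kind).up hs ((Trm.subst_var A).symm ▸ hA)
    rwa [Trm.subst_var, Trm.up_var] at this

theorem Typing.subst1 {Γ : List (Trm F)} {A a t T : Trm F} (h : Typing R Θ sΘ (A :: Γ) t T)
    (ha : Typing R Θ sΘ Γ a A) :
    Typing R Θ sΘ Γ (Trm.subst1 a t) (Trm.subst1 a T) := by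
  refine h.subst ha.type_kind ?_
  rintro (_ | i) B hB
  · cases hB
    have : A.subst (fun j => Trm.scons a Trm.var (j + 0 + 1)) = A := Trm.subst_var A
    rwa [this]
  · exact SubstTyped.id ha.type_kind i B hB

/-- Generation lemma for products. -/
theorem Typing.pi_inv {Γ : List (Trm F)} {A B T : Trm F} (h : Typing R Θ sΘ Γ (.pi A B) T) :
    Typing R Θ sΘ Γ A .type ∧ ∃ s, Trm.IsSort s ∧ Typing R Θ sΘ (A :: Γ) B s := by
  generalize ht : Trm.pi A B = t at h
  induction h generalizing A B with
  | @weak Γ C s b D hs hC hb _ ih =>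
    cases b <;> simp only [Trm.shift, Trm.rename, Trm.pi.injEq, reduceCtorEq] at ht
    rename_i A' B'
    obtain ⟨rfl, rfl⟩ := ht
    obtain ⟨hA, s', hs', hB⟩ := ih rfl
    have hA' : Typing R Θ sΘ (C :: Γ) (A'.rename Nat.succ) .type := .weak hs hC hA
    have hA'' := hA'
    rw [Trm.rename_eq_subst] at hA''
    refine ⟨hA', s', hs', ?_⟩
    have := hB.subst (.weak (.inl rfl) hA'' hA''.type_kind)
      (((SubstTyped.id hA.type_kind).weaken hs hC).up (.inl rfl) hA'')
    rw [hs'.subst_eq] at this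
    convert this using 1
    · rw [Trm.rename_eq_subst]
    · rw [Trm.rename_eq_subst, ← Trm.up_var_comp]; rfl
  | prod hs hA hB => cases ht; exact ⟨hA, _, hs, hB⟩
  | conv _ _ _ _ ih _ => exact ih ht
  | _ => cases ht

theorem Typing.ne_kind {Γ : List (Trm F)} {t T : Trm F} (h : Typing R Θ sΘ Γ t T) :
    t ≠ .kind := by
  induction h with
  | weak _ _ _ _ ih => exact fun h => ih (Trm.rename_eq_kind h)
  | conv _ _ _ _ ih _ => exact ih
  | _ => simp

theorem Typing.type_correct {Γ : List (Trm F)} {t T : Trm F} (h : Typing R Θ sΘ Γ t T) :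
    T = .kind ∨ ∃ s, Trm.IsSort s ∧ Typing R Θ sΘ Γ T s := by
  induction h with
  | ax => exact .inl rfl
  | var hs hA =>
    refine .inr ⟨_, hs, ?_⟩
    obtain rfl | rfl := hs <;> exact hA.weak (by simp [Trm.IsSort]) hA
  | weak hs hA _ _ ih =>
    obtain rfl | ⟨s', hs', hB⟩ := ih
    · exact .inl rfl
    · refine .inr ⟨s', hs', ?_⟩
      obtain rfl | rfl := hs' <;> exact .weak hs hA hB
  | prod hs hA =>
    obtain rfl | rfl := hs
    · exact .inr ⟨.kind, .inr rfl, hA.type_kind⟩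
    · exact .inl rfl
  | abs hs _ hP => exact .inr ⟨_, hs, hP⟩
  | app _ ha ih _ =>
    obtain h | ⟨s, hs, hP⟩ := ih
    · cases h
    · obtain ⟨_, s', hs', hB⟩ := hP.pi_inv
      exact .inr ⟨s', hs', hs'.subst_eq _ ▸ hB.subst1 ha⟩
  | conv _ _ hB hs => exact .inr ⟨_, hs, hB⟩
  | symb f hs hf => exact .inr ⟨_, hs, hf⟩

theorem PresTyping.redStar (hpres : PresTyping R Θ sΘ) {Γ : List (Trm F)} {t u T : Trm F}
    (h : Typing R Θ sΘ Γ t T) (hr : RedStar R t u) : Typing R Θ sΘ Γ u T := by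
  induction hr with
  | refl => exact h
  | tail _ hr ih => exact hpres _ _ _ _ ih hr

/-- `KIND` is not convertible to a typable term. -/
theorem Typing.not_joinable_kind (hRS : IsRewriteSystem R) (hpres : PresTyping R Θ sΘ)
    {Γ : List (Trm F)} {B T : Trm F} (h : Typing R Θ sΘ Γ B T) : ¬ Joinable R .kind B := by
  rintro ⟨v, hv, hB⟩
  rw [(normalForm_of_sort_or_var hRS (.inr (.inl rfl))).eq_of_redStar hv] at hB
  exact (hpres.redStar h hB).ne_kind rfl

/-- The typable terms of type `KIND` are exactly the kinds. -/
theorem Typing.isKind_iff (hRS : IsRewriteSystem R) (hpres : PresTyping R Θ sΘ)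
    {Γ : List (Trm F)} {t T : Trm F} (h : Typing R Θ sΘ Γ t T) : t.IsKind ↔ T = .kind := by
  induction h with
  | ax => simp [Trm.IsKind]
  | var _ hA => exact iff_of_false (fun h => h) fun h => hA.ne_kind (Trm.rename_eq_kind h)
  | weak _ _ _ _ ih =>
    rw [Trm.shift, Trm.isKind_rename_iff, ih]
    exact ⟨fun h => by rw [h]; rfl, Trm.rename_eq_kind⟩
  | prod _ _ _ _ ih => exact ih
  | abs => exact iff_of_false (fun h => h) (by simp)
  | @app Γ t a A B ht ha _ _ =>
    refine iff_of_false (fun h => h) fun h => ?_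
    obtain h' | ⟨s, hs, hP⟩ := ht.type_correct
    · cases h'
    · obtain ⟨_, s', _, hB⟩ := hP.pi_inv
      exact (hB.subst1 ha).ne_kind h
  | conv _ hj hB _ ih _ =>
    refine iff_of_false (fun h => ?_) hB.ne_kind
    rw [ih.1 h] at hj
    exact hB.not_joinable_kind hRS hpres hj
  | symb f _ hf => exact iff_of_false (fun h => h) hf.ne_kind

theorem Typing.pi_domain_not_isKind (hRS : IsRewriteSystem R) (hpres : PresTyping R Θ sΘ)
    {Γ : List (Trm F)} {A B T : Trm F} (h : Typing R Θ sΘ Γ (.pi A B) T) : ¬ A.IsKind := by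
  rw [h.pi_inv.1.isKind_iff hRS hpres]
  simp

end TypingMetatheory

/-! # Computability predicates -/

section Computability

variable {F : Type} {R : Rules F}

theorem Red.app_inv (hRS : IsRewriteSystem R) {t a u : Trm F} (h : Red R (.app t a) u) :
    (∃ A b, t = .lam A b ∧ u = Trm.subst1 a b) ∨
    (∃ (f : F) (ls : List (Trm F)) (r : Trm F), (Trm.appList (.sym f) ls, r) ∈ R ∧
      t.spineHead = .sym f ∧ t.spineLength + 1 = ls.length) ∨
    (∃ t', u = .app t' a ∧ Red R t t') ∨ (∃ a', u = .app t a' ∧ Red R a a') := by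
  generalize hv : Trm.app t a = v at h
  cases h with
  | beta A b a => cases hv; exact .inl ⟨A, b, rfl, rfl⟩
  | rule σ hR =>
    obtain ⟨f, ls, hf, hh, hl⟩ := hRS.exists_spine hR σ
    rw [← hv] at hh hl
    exact .inr (.inl ⟨f, ls, _, hf, hh, hl⟩)
  | appL h => cases hv; exact .inr (.inr (.inl ⟨_, rfl, h⟩))
  | appR h => cases hv; exact .inr (.inr (.inr ⟨_, rfl, h⟩))
  | _ => cases hv

theorem Red.lam_inv (hRS : IsRewriteSystem R) {A b u : Trm F} (h : Red R (.lam A b) u) :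
    (∃ A', u = .lam A' b ∧ Red R A A') ∨ (∃ b', u = .lam A b' ∧ Red R b b') := by
  generalize ht : Trm.lam A b = t at h
  cases h with
  | rule σ hR =>
    obtain ⟨f, ls, -, h, -⟩ := hRS.exists_spine hR σ
    rw [← ht] at h
    simp [Trm.spineHead] at h
  | lamL h => cases ht; exact .inl ⟨_, rfl, h⟩
  | lamR h => cases ht; exact .inr ⟨_, rfl, h⟩
  | _ => cases ht

theorem Neutral.app {t : Trm F} (h : Neutral R t) (a : Trm F) : Neutral R (.app t a) := by
  obtain ⟨A, b, c, vs, rfl⟩ | ⟨x, vs, rfl⟩ | ⟨f, vs, rfl, hf⟩ := h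
  · exact .inl ⟨A, b, c, vs ++ [a], (Trm.appList_concat _ _ _).symm⟩
  · exact .inr (.inl ⟨x, vs ++ [a], (Trm.appList_concat _ _ _).symm⟩)
  · refine .inr (.inr ⟨f, vs ++ [a], (Trm.appList_concat _ _ _).symm, fun ls r h => ?_⟩)
    have := hf ls r h
    simp only [List.length_append]
    omega

theorem Neutral.ne_lam {t : Trm F} (h : Neutral R t) (A b : Trm F) : t ≠ .lam A b := by
  rintro rfl
  obtain ⟨A', b', c, vs, h⟩ | ⟨x, vs, h⟩ | ⟨f, vs, h, -⟩ := h
  · have := congrArg Trm.spineLength h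
    rw [Trm.spineLength_appList] at this
    simp only [Trm.spineLength] at this
    omega
  all_goals
    have := congrArg Trm.spineHead h
    rw [Trm.spineHead_appList] at this
    simp [Trm.spineHead] at this

theorem Neutral.ne_pi {t : Trm F} (h : Neutral R t) (A B : Trm F) : t ≠ .pi A B := by
  rintro rfl
  obtain ⟨A', b', c, vs, h⟩ | ⟨x, vs, h⟩ | ⟨f, vs, h, -⟩ := h
  all_goals
    have := congrArg Trm.spineHead h
    rw [Trm.spineHead_appList] at this
    simp [Trm.spineHead] at this

theorem Neutral.length_le {t : Trm F} (h : Neutral R t) {f : F} (hf : t.spineHead = .sym f)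
    {ls : List (Trm F)} {r : Trm F} (hR : (Trm.appList (.sym f) ls, r) ∈ R) :
    ls.length ≤ t.spineLength := by
  obtain ⟨A, b, c, vs, rfl⟩ | ⟨x, vs, rfl⟩ | ⟨g, vs, rfl, hg⟩ := h
  · rw [Trm.spineHead_appList] at hf; simp [Trm.spineHead] at hf
  · rw [Trm.spineHead_appList] at hf; simp [Trm.spineHead] at hf
  · rw [Trm.spineHead_appList] at hf
    simp only [Trm.spineHead, Trm.sym.injEq] at hf
    subst hf
    rw [Trm.spineLength_appList]
    simpa [Trm.spineLength] using hg ls r hR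

/-- A one-step reduct of a neutral term applied to `a` comes from a reduction in the term
or in `a`. -/
theorem Neutral.red_app (hRS : IsRewriteSystem R) {t a u : Trm F} (ht : Neutral R t)
    (h : Red R (.app t a) u) :
    (∃ t', u = .app t' a ∧ Red R t t') ∨ (∃ a', u = .app t a' ∧ Red R a a') := by
  obtain ⟨A, b, rfl, -⟩ | ⟨f, ls, r, hR, hh, hl⟩ | h := h.app_inv hRS
  · exact (ht.ne_lam A b rfl).elim
  · have := ht.length_le hh hR
    omega
  · exact h

theorem SN.app_left {t a : Trm F} (h : SN R (.app t a)) : SN R t := by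
  unfold SN at *
  generalize hu : Trm.app t a = u at h
  induction h generalizing t with
  | intro u _ ih => exact .intro _ fun t' ht' => ih _ (hu ▸ .appL ht') rfl

theorem SN.pi (hRS : IsRewriteSystem R) {A : Trm F} (hA : SN R A) :
    ∀ {B : Trm F}, SN R B → SN R (.pi A B) := by
  induction hA with
  | intro A _ ihA =>
    intro B hB
    induction hB with
    | intro B hB ihB =>
      refine .intro _ fun u hu => ?_
      obtain ⟨A', rfl, h⟩ | ⟨B', rfl, h⟩ := Red.pi_inv hRS hu
      · exact ihA A' h (.intro _ hB)
      · exact ihB B' h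

theorem isCompPred_SNset : IsCompPred R (SNset R) :=
  ⟨fun _ h => h, fun _ ht _ hu => Acc.inv ht hu, fun _ _ h => .intro _ h⟩

theorem IsCompPred.var_mem (hRS : IsRewriteSystem R) {S : Set (Trm F)} (hS : IsCompPred R S)
    (n : ℕ) : Trm.var n ∈ S :=
  hS.2.2 _ (.inr (.inl ⟨n, [], rfl⟩)) fun u hu =>
    (normalForm_of_sort_or_var hRS (.inr (.inr ⟨n, rfl⟩)) u hu).elim

theorem IsCompPred.redStar_mem {S : Set (Trm F)} (hS : IsCompPred R S) {t u : Trm F} (ht : t ∈ S)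
    (h : RedStar R t u) : u ∈ S := by
  induction h with
  | refl => exact ht
  | tail _ h ih => exact hS.2.1 _ ih _ h

/-- Dependent products of computability predicates are computability predicates. -/
theorem IsCompPred.prod (hRS : IsRewriteSystem R) {P : Set (Trm F)} {Q : Trm F → Set (Trm F)}
    (hP : IsCompPred R P) (hQ : ∀ a ∈ P, IsCompPred R (Q a))
    (hred : ∀ a ∈ P, ∀ a', Red R a a' → Q a' ⊆ Q a) :
    IsCompPred R {t | ∀ a ∈ P, Trm.app t a ∈ Q a} := by
  refine ⟨fun t ht => ?_, fun t ht u hu a ha => (hQ a ha).2.1 _ (ht a ha) _ (.appL hu),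
    fun t hn ht a ha => ?_⟩
  · have hv := hP.var_mem hRS 0
    exact SN.app_left ((hQ _ hv).1 (ht _ hv))
  · have hsn : SN R a := hP.1 ha
    induction hsn with
    | intro a _ ih =>
      refine (hQ a ha).2.2 _ (hn.app a) fun u hu => ?_
      obtain ⟨t', rfl, h⟩ | ⟨a', rfl, h⟩ := hn.red_app hRS hu
      · exact ht t' h a ha
      · exact hred a ha a' h (ih a' h (hP.2.1 _ ha _ h))

theorem IsCompPred.beta_expand (hRS : IsRewriteSystem R) {S : Set (Trm F)} (hS : IsCompPred R S)
    {A : Trm F} (hA : SN R A) :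
    ∀ {b : Trm F}, SN R b → ∀ {a : Trm F}, SN R a → Trm.subst1 a b ∈ S →
      Trm.app (.lam A b) a ∈ S := by
  induction hA with
  | intro A _ ihA =>
    intro b hb
    induction hb with
    | intro b hb ihb =>
      intro a ha
      induction ha with
      | intro a ha iha =>
        intro hba
        refine hS.2.2 _ (.inl ⟨A, b, a, [], rfl⟩) fun u hu => ?_
        obtain ⟨A', b', he, rfl⟩ | ⟨f, ls, r, -, hh, -⟩ | ⟨t', rfl, h⟩ | ⟨a', rfl, h⟩ :=
          hu.app_inv hRS
        · cases he; exact hba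
        · simp [Trm.spineHead] at hh
        · obtain ⟨A', rfl, hA'⟩ | ⟨b', rfl, hb'⟩ := h.lam_inv hRS
          · exact ihA A' hA' (.intro _ hb) (.intro _ ha) hba
          · exact ihb b' hb' (.intro _ ha) (hS.2.1 _ hba _ (hb'.subst _))
        · exact iha a' h (hS.redStar_mem hba (redStar_subst1 (.single h) b))

end Computability

/-! # The least fixpoint of `interpF` -/

section Fixpoint

variable {F : Type} {R : Rules F} {I : Interp F}

open Classical in
/-- The value of `interpF R I` at `T`, irrespective of whether `T` is in the domain. -/
noncomputable def interpVal (R : Rules F) (I : Interp F) (T : Trm F) : Set (Trm F) :=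
  if h : ∃ A B, RedStar R T (.pi A B) ∧ NormalForm R (.pi A B) then
    piPart I h.choose h.choose_spec.choose
  else SNset R

theorem mem_interpF_iff {T : Trm F} {S : Set (Trm F)} :
    S ∈ interpF R I T ↔ T ∈ domD R I ∧ S = interpVal R I T := by
  constructor
  · rintro ⟨h, rfl⟩
    exact ⟨h, rfl⟩
  · rintro ⟨h, rfl⟩
    exact ⟨h, rfl⟩

theorem interpVal_cases (R : Rules F) (T : Trm F) :
    ((¬ ∃ A B, RedStar R T (.pi A B) ∧ NormalForm R (.pi A B)) ∧
      ∀ I, interpVal R I T = SNset R) ∨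
    ∃ A B, RedStar R T (.pi A B) ∧ ∀ I, interpVal R I T = piPart I A B := by
  by_cases h : ∃ A B, RedStar R T (.pi A B) ∧ NormalForm R (.pi A B)
  · exact .inr ⟨_, _, h.choose_spec.choose_spec.1, fun I => dif_pos h⟩
  · exact .inl ⟨h, fun I => dif_neg h⟩

theorem interpVal_redStar (hconf : LocallyConfluent R) {T T' : Trm F} (hT : SN R T)
    (h : RedStar R T T') : interpVal R I T' = interpVal R I T := by
  have key : (fun A B => RedStar R T' (.pi A B) ∧ NormalForm R (.pi A B)) =
      fun A B => RedStar R T (.pi A B) ∧ NormalForm R (.pi A B) := by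
    funext A B
    refine propext ⟨fun h' => ⟨h.trans h'.1, h'.2⟩, fun h' => ⟨?_, h'.2⟩⟩
    obtain ⟨v, hv, hv'⟩ := hT.confluent hconf h h'.1
    rwa [h'.2.eq_of_redStar hv'] at hv
  have hval : ∀ T, interpVal R I T =
      (fun P : Trm F → Trm F → Prop => open Classical in
        if h : ∃ A B, P A B then piPart I h.choose h.choose_spec.choose else SNset R)
      (fun A B => RedStar R T (.pi A B) ∧ NormalForm R (.pi A B)) := fun _ => rfl
  rw [hval, hval, key]

theorem mem_iff_of_fixpoint (hI : interpF R I = I) {T : Trm F} {S : Set (Trm F)} :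
    S ∈ I T ↔ T ∈ domD R I ∧ S = interpVal R I T := by
  rw [← mem_interpF_iff, hI]

theorem dom_iff_of_fixpoint (hI : interpF R I = I) {T : Trm F} : (I T).Dom ↔ T ∈ domD R I := by
  conv_lhs => rw [← hI]
  rfl

theorem partMem_eq_interpVal (hI : interpF R I = I) {T : Trm F} (hT : T ∈ domD R I) :
    partMem I T = interpVal R I T := by
  ext t
  simp [partMem, mem_iff_of_fixpoint hI, hT]

theorem mem_domD_iff (hI : interpF R I = I) {T : Trm F} :
    T ∈ domD R I ↔ SN R T ∧ ∀ A B, RedStar R T (.pi A B) →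
      A ∈ domD R I ∧ ∀ a ∈ partMem I A, Trm.subst1 a B ∈ domD R I := by
  refine and_congr_right fun _ => forall_congr' fun A => forall_congr' fun B =>
    imp_congr_right fun _ => ?_
  simp only [dom_iff_of_fixpoint hI]
  refine and_congr_right fun hA => ?_
  simp [mem_iff_of_fixpoint hI, hA, partMem_eq_interpVal hI hA]

theorem piPart_eq (hI : interpF R I = I) {A B : Trm F} (hA : A ∈ domD R I) :
    piPart I A B = {t | ∀ a ∈ partMem I A, Trm.app t a ∈ partMem I (Trm.subst1 a B)} := by
  ext t
  simp [piPart, partMem, mem_iff_of_fixpoint hI, hA]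

theorem domD_redStar (hI : interpF R I = I) {T T' : Trm F} (hT : T ∈ domD R I)
    (h : RedStar R T T') : T' ∈ domD R I := by
  rw [mem_domD_iff hI] at *
  exact ⟨hT.1.redStar h, fun A B h' => hT.2 A B (h.trans h')⟩

theorem partMem_redStar (hconf : LocallyConfluent R) (hI : interpF R I = I) {T T' : Trm F}
    (hT : T ∈ domD R I) (h : RedStar R T T') : partMem I T' = partMem I T := by
  rw [partMem_eq_interpVal hI hT, partMem_eq_interpVal hI (domD_redStar hI hT h),
    interpVal_redStar hconf hT.1 h]

theorem partMem_pi (hRS : IsRewriteSystem R) (hconf : LocallyConfluent R) (hI : interpF R I = I)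
    {A B : Trm F} (h : Trm.pi A B ∈ domD R I) :
    partMem I (.pi A B) =
      {t | ∀ a ∈ partMem I A, Trm.app t a ∈ partMem I (Trm.subst1 a B)} := by
  obtain ⟨hA, hB⟩ := ((mem_domD_iff hI).1 h).2 A B .refl
  rw [partMem_eq_interpVal hI h]
  obtain ⟨hn, -⟩ | ⟨A', B', hr, hval⟩ := interpVal_cases R (.pi A B)
  · obtain ⟨u, hu, hnf⟩ := h.1.exists_normalForm
    obtain ⟨A', B', rfl, -, -⟩ := hu.pi_inv hRS
    exact (hn ⟨A', B', hu, hnf⟩).elim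
  · obtain ⟨_, _, he, hrA, hrB⟩ := hr.pi_inv hRS
    cases he
    rw [hval, piPart_eq hI (domD_redStar hI hA hrA), partMem_redStar hconf hI hA hrA]
    ext t
    refine forall_congr' fun a => imp_congr_right fun ha => ?_
    have hr' : RedStar R (Trm.subst1 a B) (Trm.subst1 a B') := hrB.subst _
    rw [partMem_redStar hconf hI (hB a ha) hr']

/-- The inductively generated part of the domain of a fixpoint of `interpF`. -/
inductive InterpGen (R : Rules F) (I : Interp F) : Trm F → Prop
  | intro {T : Trm F} (hT : T ∈ domD R I)
      (hdom : ∀ A B, RedStar R T (.pi A B) → InterpGen R I A)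
      (hcod : ∀ A B, RedStar R T (.pi A B) → ∀ a ∈ partMem I A, InterpGen R I (Trm.subst1 a B)) :
      InterpGen R I T

theorem InterpGen.mem_domD {T : Trm F} (h : InterpGen R I T) : T ∈ domD R I := by
  cases h; assumption

/-- The restriction of a fixpoint to its inductively generated part. -/
def interpRestrict (R : Rules F) (I : Interp F) : Interp F := fun T =>
  ⟨InterpGen R I T ∧ (I T).Dom, fun h => (I T).get h.2⟩

theorem mem_interpRestrict_iff {T : Trm F} {S : Set (Trm F)} :
    S ∈ interpRestrict R I T ↔ InterpGen R I T ∧ S ∈ I T := by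
  constructor
  · rintro ⟨⟨h, hd⟩, rfl⟩
    exact ⟨h, hd, rfl⟩
  · rintro ⟨h, hd, rfl⟩
    exact ⟨⟨h, hd⟩, rfl⟩

theorem mem_domD_interpRestrict_iff (hI : interpF R I = I) {T : Trm F} :
    T ∈ domD R (interpRestrict R I) ↔ InterpGen R I T := by
  have hdom : ∀ {A}, (interpRestrict R I A).Dom ↔ InterpGen R I A := fun {A} =>
    ⟨fun h => h.1, fun h => ⟨h, (dom_iff_of_fixpoint hI).2 h.mem_domD⟩⟩
  have hmem : ∀ {A S}, InterpGen R I A → (S ∈ interpRestrict R I A ↔ S = partMem I A) := by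
    intro A S hA
    rw [mem_interpRestrict_iff, mem_iff_of_fixpoint hI, partMem_eq_interpVal hI hA.mem_domD]
    simp [hA, hA.mem_domD]
  constructor
  · rintro ⟨hsn, h⟩
    simp only [hdom] at h
    have hcod : ∀ A B, RedStar R T (.pi A B) → ∀ a ∈ partMem I A,
        InterpGen R I (Trm.subst1 a B) := fun A B hr a ha =>
      (h A B hr).2 _ ((hmem (h A B hr).1).2 rfl) a ha
    exact .intro ((mem_domD_iff hI).2 ⟨hsn, fun A B hr =>
      ⟨(h A B hr).1.mem_domD, fun a ha => (hcod A B hr a ha).mem_domD⟩⟩)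
      (fun A B hr => (h A B hr).1) hcod
  · rintro ⟨hT, hd, hc⟩
    refine ⟨hT.1, fun A B hr => ⟨hdom.2 (hd A B hr), fun S hS a ha => hdom.2 ?_⟩⟩
    rw [hmem (hd A B hr)] at hS
    exact hc A B hr a (hS ▸ ha)

theorem interpF_interpRestrict (hI : interpF R I = I) :
    interpF R (interpRestrict R I) = interpRestrict R I := by
  funext T
  refine Part.ext fun S => ?_
  rw [mem_interpF_iff, mem_domD_interpRestrict_iff hI, mem_interpRestrict_iff]
  refine and_congr_right fun hT => ?_
  rw [mem_iff_of_fixpoint hI, and_iff_right hT.mem_domD]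
  suffices interpVal R (interpRestrict R I) T = interpVal R I T by rw [this]
  obtain ⟨-, hval⟩ | ⟨A, B, hr, hval⟩ := interpVal_cases R T
  · rw [hval, hval]
  · rw [hval, hval]
    obtain ⟨-, hd, hc⟩ := hT
    have hA := hd A B hr
    have hB := hc A B hr
    ext t
    simp only [piPart, mem_interpRestrict_iff, hA, true_and, Set.mem_ofPred_eq]
    refine forall_congr' fun S => imp_congr_right fun hS => forall_congr' fun a =>
      imp_congr_right fun ha => ?_
    have : InterpGen R I (Trm.subst1 a B) := hB a fun S' hS' => Part.mem_unique hS hS' ▸ ha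
    simp [this]

theorem IsLfpInterp.interpGen (hlfp : IsLfpInterp (interpF R) I) {T : Trm F}
    (hT : T ∈ domD R I) : InterpGen R I T := by
  have := hlfp.2 _ (interpF_interpRestrict hlfp.1) T _
    ((mem_iff_of_fixpoint hlfp.1).2 ⟨hT, rfl⟩)
  exact (mem_interpRestrict_iff.1 this).1

theorem isCompPred_partMem (hRS : IsRewriteSystem R) (hconf : LocallyConfluent R)
    (hlfp : IsLfpInterp (interpF R) I) {T : Trm F} (hT : T ∈ domD R I) :
    IsCompPred R (partMem I T) := by
  have hI := hlfp.1
  induction hlfp.interpGen hT with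
  | @intro T hT _ _ ihd ihc =>
    rw [partMem_eq_interpVal hI hT]
    obtain ⟨-, hval⟩ | ⟨A, B, hr, hval⟩ := interpVal_cases R T
    · rw [hval]
      exact isCompPred_SNset
    · obtain ⟨hA, hB⟩ := ((mem_domD_iff hI).1 hT).2 A B hr
      rw [hval, piPart_eq hI hA]
      refine .prod hRS (ihd A B hr hA) (fun a ha => ihc A B hr a ha (hB a ha))
        fun a ha a' h => ?_
      rw [partMem_redStar hconf hI (hB a ha) (redStar_subst1 (.single h) B)]

theorem isCompPred_domD (hI : interpF R I = I) : IsCompPred R (domD R I) := by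
  refine ⟨fun T hT => hT.1, fun T hT U h => domD_redStar hI hT (.single h), fun T hn h => ?_⟩
  refine (mem_domD_iff hI).2 ⟨.intro _ fun U hU => (h U hU).1, fun A B hr => ?_⟩
  obtain rfl | ⟨U, hU, hr⟩ := hr.cases_head
  · exact (hn.ne_pi A B rfl).elim
  · exact ((mem_domD_iff hI).1 (h U hU)).2 A B hr

end Fixpoint

/-! # Interpretation of types -/

section Interpretation

variable {F : Type} {R : Rules F} {Θ sΘ : F → Trm F} {I : Interp F}

open Classical in
theorem interp_of_not_isKind {T : Trm F} (hk : ¬ T.IsKind) (hT : T ≠ .kind) (σ : ℕ → Trm F) :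
    interp R I T σ = if T.subst σ ∈ domD R I then partMem I (T.subst σ) else SNset R := by
  cases T with
  | type => exact (hk trivial).elim
  | kind => exact (hT rfl).elim
  | pi A B =>
    rw [interp, if_neg]
    exact hk
  | _ => rw [interp]

theorem interp_eq_partMem {T : Trm F} (hk : ¬ T.IsKind) (hT : T ≠ .kind) {σ : ℕ → Trm F}
    (hσ : T.subst σ ∈ domD R I) : interp R I T σ = partMem I (T.subst σ) := by
  rw [interp_of_not_isKind hk hT, if_pos hσ]

theorem interp_sort {s : Trm F} (hs : s.IsSort) (σ : ℕ → Trm F) : interp R I s σ = domD R I := by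
  obtain rfl | rfl := hs <;> rw [interp]

theorem interp_pi_of_isKind {B : Trm F} (hB : B.IsKind) (A : Trm F) (σ : ℕ → Trm F) :
    interp R I (.pi A B) σ =
      {t | ∀ a ∈ interp R I A σ, Trm.app t a ∈ interp R I B (Trm.scons a σ)} := by
  rw [interp, if_pos hB]

theorem interp_subst (T : Trm F) {τ : ℕ → Trm F} (hτ : ∀ i, ¬ (τ i).IsKind ∧ τ i ≠ .kind)
    (σ : ℕ → Trm F) :
    interp R I (T.subst τ) σ = interp R I T (fun i => (τ i).subst σ) := by
  induction T generalizing τ σ with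
  | type => rfl
  | kind => rfl
  | var n =>
    rw [Trm.subst, interp_of_not_isKind (hτ n).1 (hτ n).2, interp_of_not_isKind id (by simp)]
    rfl
  | pi A B ihA ihB =>
    have hup : ∀ i, ¬ (Trm.up τ i).IsKind ∧ Trm.up τ i ≠ .kind := by
      rintro (_ | n)
      · exact ⟨id, by simp [Trm.up]⟩
      · simp only [Trm.up, Trm.isKind_rename_iff]
        exact ⟨(hτ n).1, fun h => (hτ n).2 (Trm.rename_eq_kind h)⟩
    have hk := Trm.isKind_subst_iff (fun i => (hup i).1) B
    by_cases hB : B.IsKind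
    · rw [Trm.subst, interp_pi_of_isKind (hk.2 hB), interp_pi_of_isKind hB, ihA hτ]
      simp only [ihB hup, Trm.subst_up_scons]
    · rw [interp_of_not_isKind (T := .pi A B) hB (by simp),
        interp_of_not_isKind (T := (Trm.pi A B).subst τ) (mt hk.1 hB) (by simp [Trm.subst]),
        Trm.subst_subst]
  | _ =>
    rw [interp_of_not_isKind id (by simp [Trm.subst]), interp_of_not_isKind id (by simp),
      Trm.subst_subst]

theorem interp_shift (T : Trm F) (σ : ℕ → Trm F) :
    interp R I T.shift σ = interp R I T (fun i => σ (i + 1)) := by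
  rw [Trm.shift, Trm.rename_eq_subst, interp_subst _ fun i => ⟨id, by simp⟩]
  rfl

theorem interp_congr_FV {T : Trm F} {σ τ : ℕ → Trm F} (h : ∀ i ∈ T.FV, σ i = τ i) :
    interp R I T σ = interp R I T τ := by
  induction T generalizing σ τ with
  | type => rfl
  | kind => rfl
  | pi A B ihA ihB =>
    by_cases hB : B.IsKind
    · rw [interp_pi_of_isKind hB, interp_pi_of_isKind hB, ihA fun i hi => h i (.inl hi)]
      have : ∀ a, interp R I B (Trm.scons a σ) = interp R I B (Trm.scons a τ) := fun a => by
        refine ihB ?_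
        rintro (_ | n) hn
        · rfl
        · exact h n (.inr hn)
      simp only [this]
    · rw [interp_of_not_isKind (T := .pi A B) hB (by simp),
        interp_of_not_isKind (T := .pi A B) hB (by simp), Trm.subst_congr_FV h]
  | _ =>
    rw [interp_of_not_isKind id (by simp), interp_of_not_isKind id (by simp),
      Trm.subst_congr_FV h]

theorem pi_subst_mem_domD (hI : interpF R I = I) {A B : Trm F} {σ : ℕ → Trm F}
    (h : (Trm.pi A B).subst σ ∈ domD R I) :
    A.subst σ ∈ domD R I ∧ ∀ a ∈ partMem I (A.subst σ), B.subst (Trm.scons a σ) ∈ domD R I := by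
  have := ((mem_domD_iff hI).1 h).2 _ _ .refl
  simpa only [Trm.subst1_subst_up] using this

theorem interp_pi_domain (hRS : IsRewriteSystem R) (hpres : PresTyping R Θ sΘ)
    (hI : interpF R I = I) {Γ : List (Trm F)} {A B T : Trm F}
    (hP : Typing R Θ sΘ Γ (.pi A B) T) {σ : ℕ → Trm F}
    (hσ : (Trm.pi A B).subst σ ∈ domD R I) :
    interp R I A σ = partMem I (A.subst σ) :=
  interp_eq_partMem (hP.pi_domain_not_isKind hRS hpres) hP.pi_inv.1.ne_kind
    (pi_subst_mem_domD hI hσ).1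

/-- The interpretation of a typable product is the dependent product of the interpretations
of its components. -/
theorem interp_pi (hRS : IsRewriteSystem R) (hconf : LocallyConfluent R)
    (hpres : PresTyping R Θ sΘ) (hI : interpF R I = I) {Γ : List (Trm F)} {A B T : Trm F}
    (hP : Typing R Θ sΘ Γ (.pi A B) T) {σ : ℕ → Trm F}
    (hσ : (Trm.pi A B).subst σ ∈ domD R I) :
    interp R I (.pi A B) σ =
      {t | ∀ a ∈ interp R I A σ, Trm.app t a ∈ interp R I B (Trm.scons a σ)} := by
  by_cases hB : B.IsKind
  · exact interp_pi_of_isKind hB A σ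
  · rw [interp_eq_partMem (T := .pi A B) hB (by simp) hσ, interp_pi_domain hRS hpres hI hP hσ]
    obtain ⟨_, s, _, hBs⟩ := hP.pi_inv
    refine (partMem_pi hRS hconf hI hσ).trans ?_
    ext t
    refine forall_congr' fun a => imp_congr_right fun ha => ?_
    rw [interp_eq_partMem hB hBs.ne_kind ((pi_subst_mem_domD hI hσ).2 a ha),
      Trm.subst1_subst_up]

theorem interp_redStar_subst (hRS : IsRewriteSystem R) (hconf : LocallyConfluent R)
    (hpres : PresTyping R Θ sΘ) (hI : interpF R I = I) {Γ : List (Trm F)} {U T : Trm F}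
    (h : Typing R Θ sΘ Γ U T) {σ τ : ℕ → Trm F} (hσ : U.subst σ ∈ domD R I)
    (hr : ∀ i, RedStar R (σ i) (τ i)) : interp R I U τ = interp R I U σ := by
  induction U generalizing Γ T σ τ with
  | type => rfl
  | kind => rfl
  | pi A B ihA ihB =>
    have hτ := domD_redStar hI hσ (redStar_subst_of_pointwise hr _)
    obtain ⟨hA, s, _, hB⟩ := h.pi_inv
    obtain ⟨hAσ, hBσ⟩ := pi_subst_mem_domD hI hσ
    rw [interp_pi hRS hconf hpres hI h hσ, interp_pi hRS hconf hpres hI h hτ, ihA hA hAσ hr]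
    ext t
    refine forall_congr' fun a => imp_congr_right fun ha => ?_
    rw [interp_pi_domain hRS hpres hI h hσ] at ha
    rw [ihB hB (hBσ a ha) (redStar_scons .refl hr)]
  | _ =>
    have hred : ∀ t : Trm F, RedStar R (t.subst σ) (t.subst τ) := redStar_subst_of_pointwise hr
    rw [interp_eq_partMem id (by simp) hσ,
      interp_eq_partMem id (by simp) (domD_redStar hI hσ (hred _)),
      partMem_redStar hconf hI hσ (hred _)]

theorem isCompPred_interp (hRS : IsRewriteSystem R) (hconf : LocallyConfluent R)
    (hpres : PresTyping R Θ sΘ) (hlfp : IsLfpInterp (interpF R) I) {Γ : List (Trm F)}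
    {U T : Trm F} (h : Typing R Θ sΘ Γ U T) {σ : ℕ → Trm F} (hσ : U.subst σ ∈ domD R I) :
    IsCompPred R (interp R I U σ) := by
  have hI := hlfp.1
  induction U generalizing Γ T σ with
  | type => rw [interp]; exact isCompPred_domD hI
  | kind => rw [interp]; exact isCompPred_domD hI
  | pi A B ihA ihB =>
    obtain ⟨hA, s, _, hB⟩ := h.pi_inv
    obtain ⟨hAσ, hBσ⟩ := pi_subst_mem_domD hI hσ
    rw [← interp_pi_domain hRS hpres hI h hσ] at hBσ
    rw [interp_pi hRS hconf hpres hI h hσ]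
    refine .prod hRS (ihA hA hAσ) (fun a ha => ihB hB (hBσ a ha)) fun a ha a' hr => ?_
    rw [interp_redStar_subst hRS hconf hpres hI hB (hBσ a ha)
      (redStar_scons (.single hr) fun _ => .refl)]
  | _ =>
    rw [interp_eq_partMem id (by simp) hσ]
    exact isCompPred_partMem hRS hconf hlfp hσ

theorem interp_red (hRS : IsRewriteSystem R) (hconf : LocallyConfluent R)
    (hpres : PresTyping R Θ sΘ) (hI : interpF R I = I) {Γ : List (Trm F)} {U U' T : Trm F}
    (h : Typing R Θ sΘ Γ U T) {σ : ℕ → Trm F} (hσ : U.subst σ ∈ domD R I) (hr : Red R U U') :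
    interp R I U' σ = interp R I U σ := by
  induction U generalizing Γ T σ U' with
  | type => exact (normalForm_of_sort_or_var hRS (.inl rfl) _ hr).elim
  | kind => exact (normalForm_of_sort_or_var hRS (.inr (.inl rfl)) _ hr).elim
  | pi A B ihA ihB =>
    have h' := hpres _ _ _ _ h hr
    have hσ' := domD_redStar hI hσ (.single (hr.subst σ))
    obtain ⟨hA, s, _, hB⟩ := h.pi_inv
    obtain ⟨hAσ, hBσ⟩ := pi_subst_mem_domD hI hσ
    obtain ⟨A', rfl, hrA⟩ | ⟨B', rfl, hrB⟩ := hr.pi_inv hRS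
    · rw [interp_pi hRS hconf hpres hI h hσ, interp_pi hRS hconf hpres hI h' hσ',
        ihA hA hAσ hrA]
    · rw [interp_pi hRS hconf hpres hI h hσ, interp_pi hRS hconf hpres hI h' hσ']
      ext t
      refine forall_congr' fun a => imp_congr_right fun ha => ?_
      rw [interp_pi_domain hRS hpres hI h hσ] at ha
      rw [ihB hB (hBσ a ha) hrB]
  | _ =>
    have h' := hpres _ _ _ _ h hr
    have hk : ¬ U'.IsKind := by
      rw [h'.isKind_iff hRS hpres, ← h.isKind_iff hRS hpres]
      exact id
    have hrσ : RedStar R _ _ := .single (hr.subst σ)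
    rw [interp_eq_partMem id (by simp) hσ,
      interp_eq_partMem hk h'.ne_kind (domD_redStar hI hσ hrσ), partMem_redStar hconf hI hσ hrσ]

theorem interp_redStar (hRS : IsRewriteSystem R) (hconf : LocallyConfluent R)
    (hpres : PresTyping R Θ sΘ) (hI : interpF R I = I) {Γ : List (Trm F)} {U U' T : Trm F}
    (h : Typing R Θ sΘ Γ U T) {σ : ℕ → Trm F} (hσ : U.subst σ ∈ domD R I)
    (hr : RedStar R U U') : interp R I U' σ = interp R I U σ := by
  induction hr with
  | refl => rfl
  | tail hr hr' ih =>
    rw [← ih, interp_red hRS hconf hpres hI (hpres.redStar h hr)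
      (domD_redStar hI hσ (RedStar.subst hr σ)) hr']

theorem mem_domD_of_normalForm (hI : interpF R I = I) {T : Trm F} (hT : NormalForm R T)
    (hp : ∀ A B, T ≠ .pi A B) : T ∈ domD R I :=
  (mem_domD_iff hI).2 ⟨hT.sn, fun A B hr => (hp A B (hT.eq_of_redStar hr).symm).elim⟩

theorem Models.tail {A : Trm F} {Γ : List (Trm F)} {σ : ℕ → Trm F}
    (h : Models R I σ (A :: Γ)) : Models R I (fun i => σ (i + 1)) Γ :=
  fun i B hB => h (i + 1) B hB

theorem Models.scons {A a : Trm F} {Γ : List (Trm F)} {σ : ℕ → Trm F}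
    (ha : a ∈ interp R I A σ) (h : Models R I σ Γ) : Models R I (Trm.scons a σ) (A :: Γ) := by
  rintro (_ | i) B hB
  · cases hB; exact ha
  · exact h i B hB

theorem SN.of_subst_scons_var {B : Trm F} {σ : ℕ → Trm F} {n : ℕ}
    (h : SN R (B.subst (Trm.scons (.var n) σ))) : SN R (B.subst (Trm.up σ)) := by
  rw [← Trm.subst1_subst_up] at h
  exact h.of_subst

theorem pi_mem_domD (hRS : IsRewriteSystem R) (hconf : LocallyConfluent R)
    (hlfp : IsLfpInterp (interpF R) I) {A B : Trm F} {σ : ℕ → Trm F}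
    (hA : A.subst σ ∈ domD R I)
    (hB : ∀ a ∈ partMem I (A.subst σ), B.subst (Trm.scons a σ) ∈ domD R I) :
    (Trm.pi A B).subst σ ∈ domD R I := by
  have hI := hlfp.1
  have hsnB : SN R (B.subst (Trm.up σ)) :=
    .of_subst_scons_var (hB _ ((isCompPred_partMem hRS hconf hlfp hA).var_mem hRS 0)).1
  refine (mem_domD_iff hI).2 ⟨?_, fun A' B' hr => ?_⟩
  · exact SN.pi hRS hA.1 hsnB
  · obtain ⟨_, _, he, hrA, hrB⟩ := hr.pi_inv hRS
    cases he
    refine ⟨domD_redStar hI hA hrA, fun a ha => ?_⟩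
    rw [partMem_redStar hconf hI hA hrA] at ha
    have := hB a ha
    rw [← Trm.subst1_subst_up] at this
    exact domD_redStar hI this (hrB.subst _)

/-- Adequacy, strengthened with the computability of the type. -/
theorem adequacy_and_type_mem_domD (hRS : IsRewriteSystem R) (hconf : LocallyConfluent R)
    (hpres : PresTyping R Θ sΘ) (hlfp : IsLfpInterp (interpF R) I)
    (hadeq : Adequate R Θ sΘ I) {Γ : List (Trm F)} {t T : Trm F} (h : Typing R Θ sΘ Γ t T) :
    ∀ σ : ℕ → Trm F, Models R I σ Γ →
      t.subst σ ∈ interp R I T σ ∧ (T ≠ .kind → T.subst σ ∈ domD R I) := by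
  have hI := hlfp.1
  have htype : Trm.type ∈ domD R I :=
    mem_domD_of_normalForm hI (normalForm_of_sort_or_var hRS (.inl rfl)) (by simp)
  induction h with
  | ax =>
    intro σ _
    rw [interp_sort (.inr rfl)]
    exact ⟨htype, fun h => (h rfl).elim⟩
  | var hs hA ih =>
    intro σ hσ
    have hA' := (ih _ hσ.tail).1
    rw [interp_sort hs] at hA'
    rw [interp_shift, Trm.shift, Trm.subst_rename]
    exact ⟨hσ 0 _ rfl, fun _ => hA'⟩
  | weak hs hA hb _ ih =>
    intro σ hσ
    obtain ⟨h₁, h₂⟩ := ih _ hσ.tail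
    rw [interp_shift, Trm.shift, Trm.subst_rename, Trm.subst_rename]
    exact ⟨h₁, fun h => h₂ fun h' => h (by rw [h']; rfl)⟩
  | @prod Γ A B s hs hA hB ihA ihB =>
    intro σ hσ
    have hA' := (ihA σ hσ).1
    rw [interp_sort (.inl rfl)] at hA'
    have hAk : ¬ A.IsKind := by rw [hA.isKind_iff hRS hpres]; simp
    refine ⟨?_, fun h => ?_⟩
    · rw [interp_sort hs]
      refine pi_mem_domD hRS hconf hlfp hA' fun a ha => ?_
      rw [← interp_eq_partMem hAk hA.ne_kind hA'] at ha
      have := (ihB _ (hσ.scons ha)).1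
      rwa [interp_sort hs] at this
    · obtain rfl | rfl := hs
      · exact htype
      · exact (h rfl).elim
  | @abs Γ A b B s hs hb hP ihb ihP =>
    intro σ hσ
    have hP' := (ihP σ hσ).1
    rw [interp_sort hs] at hP'
    refine ⟨?_, fun _ => hP'⟩
    rw [interp_pi hRS hconf hpres hI hP hP']
    intro a ha
    obtain ⟨hA, s', hs', hB⟩ := hP.pi_inv
    obtain ⟨hAσ, hBσ⟩ := pi_subst_mem_domD hI hP'
    have hdom := interp_pi_domain hRS hpres hI hP hP'
    rw [← hdom] at hBσ
    have hcompA : IsCompPred R (interp R I A σ) :=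
      hdom ▸ isCompPred_partMem hRS hconf hlfp hAσ
    have hcompB : ∀ a ∈ interp R I A σ, IsCompPred R (interp R I B (Trm.scons a σ)) :=
      fun a ha => isCompPred_interp hRS hconf hpres hlfp hB (hBσ a ha)
    have hbσ : ∀ a ∈ interp R I A σ,
        b.subst (Trm.scons a σ) ∈ interp R I B (Trm.scons a σ) :=
      fun a ha => (ihb _ (hσ.scons ha)).1
    have hv := hcompA.var_mem hRS 0
    refine (hcompB a ha).beta_expand hRS hAσ.1
      (.of_subst_scons_var ((hcompB _ hv).1 (hbσ _ hv))) (hcompA.1 ha) ?_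
    rw [Trm.subst1_subst_up]
    exact hbσ a ha
  | @app Γ t a A B ht ha iht iha =>
    intro σ hσ
    obtain ⟨ht', hP'⟩ := iht σ hσ
    have ha' := (iha σ hσ).1
    replace hP' := hP' (by simp)
    obtain h | ⟨s, hs, hP⟩ := ht.type_correct
    · cases h
    obtain ⟨hA, s', hs', hB⟩ := hP.pi_inv
    have hak : ¬ a.IsKind := by rw [ha.isKind_iff hRS hpres]; exact hA.ne_kind
    rw [interp_pi hRS hconf hpres hI hP hP'] at ht'
    refine ⟨?_, fun _ => ?_⟩
    · rw [Trm.subst1, interp_subst, Trm.subst_scons_comp]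
      · exact ht' _ ha'
      · rintro (_ | n)
        · exact ⟨hak, ha.ne_kind⟩
        · exact ⟨id, by simp [Trm.scons]⟩
    · rw [Trm.subst_subst1]
      rw [interp_pi_domain hRS hpres hI hP hP'] at ha'
      exact (pi_subst_mem_domD hI hP').2 _ ha'
  | @conv Γ a A B s ha hj hB hs iha ihB =>
    intro σ hσ
    have hBσ := (ihB σ hσ).1
    rw [interp_sort hs] at hBσ
    refine ⟨?_, fun _ => hBσ⟩
    obtain ⟨haσ, hAσ⟩ := iha σ hσ
    obtain rfl | ⟨s', _, hA⟩ := ha.type_correct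
    · exact (hB.not_joinable_kind hRS hpres hj).elim
    obtain ⟨C, hAC, hBC⟩ := hj
    rwa [← interp_redStar hRS hconf hpres hI hB hBσ hBC,
      interp_redStar hRS hconf hpres hI hA (hAσ hA.ne_kind) hAC]
  | symb f hs hf ih =>
    intro σ _
    have hΘ := ih .var (fun i A h => by simp at h)
    rw [Trm.subst_var] at hΘ
    have hclosed : ∀ τ : ℕ → Trm F, ∀ i ∈ (Θ f).FV, σ i = τ i := fun τ i hi =>
      absurd (hf.FV_lt i hi) (Nat.not_lt_zero i)
    refine ⟨?_, fun _ => ?_⟩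
    · rw [interp_congr_FV (hclosed .var)]
      exact hadeq f hf hΘ.1
    · rw [hf.subst_eq_of_nil]
      rw [interp_sort hs] at hΘ
      exact hΘ.1

/-- Renamings by a constant offset are adequate with respect to every valid environment. -/
theorem models_var_add (hRS : IsRewriteSystem R) (hconf : LocallyConfluent R)
    (hpres : PresTyping R Θ sΘ) (hlfp : IsLfpInterp (interpF R) I)
    (hadeq : Adequate R Θ sΘ I) {Γ : List (Trm F)} (hΓ : Typing R Θ sΘ Γ .type .kind) (k : ℕ) :
    Models R I (fun i => .var (i + k)) Γ := by
  induction Γ generalizing k with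
  | nil => intro i A h; simp at h
  | cons A Γ ih =>
    obtain ⟨s, hs, hA⟩ := hΓ.context_head
    have hσ := ih hA.type_kind (k + 1)
    have hAσ := (adequacy_and_type_mem_domD hRS hconf hpres hlfp hadeq hA _ hσ).1
    rw [interp_sort hs] at hAσ
    have := hσ.scons ((isCompPred_interp hRS hconf hpres hlfp hA hAσ).var_mem hRS k)
    convert this using 1
    funext i
    cases i with
    | zero => simp [Trm.scons]
    | succ n => simp only [Trm.scons]; congr 1; omega

end Interpretation

/-- Adequacy, Lemma 5 of the paper. If `→` is locally confluent and
preserves typing and the typing map `Θ` is adequate, then `Γ ⊢ t : T` and `σ ⊨ Γ` imply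
`tσ ∈ ⟦T⟧σ`; in particular, every typable term is strongly normalizing. -/
theorem adequacy {F : Type} (R : Rules F) (Θ sΘ : F → Trm F)
    (hRS : IsRewriteSystem R)
    (hconf : LocallyConfluent R)
    (hpres : PresTyping R Θ sΘ)
    (calI : Interp F) (hlfp : IsLfpInterp (interpF R) calI)
    (hadeq : Adequate R Θ sΘ calI) :
    (∀ (Γ : List (Trm F)) (t T : Trm F) (σ : ℕ → Trm F),
      Typing R Θ sΘ Γ t T → Models R calI σ Γ → Trm.subst σ t ∈ interp R calI T σ) ∧
    (∀ (Γ : List (Trm F)) (t T : Trm F), Typing R Θ sΘ Γ t T → SN R t) := by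
  refine ⟨fun Γ t T σ h hσ =>
    (adequacy_and_type_mem_domD hRS hconf hpres hlfp hadeq h σ hσ).1, fun Γ t T h => ?_⟩
  have hσ := models_var_add hRS hconf hpres hlfp hadeq h.type_kind 0
  obtain ⟨ht, hT⟩ := adequacy_and_type_mem_domD hRS hconf hpres hlfp hadeq h .var hσ
  rw [Trm.subst_var] at ht hT
  obtain rfl | ⟨s, hs, hTs⟩ := h.type_correct
  · rw [interp_sort (.inr rfl)] at ht
    exact ht.1
  · refine (isCompPred_interp hRS hconf hpres hlfp hTs ?_).1 ht
    rw [Trm.subst_var]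
    exact hT hTs.ne_kind
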